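/- arXiv:2412.10936 — 7 statements merged into one kernel-verified Lean document; each statement's English description precedes it below -/
import Mathlib

section
/- Let K be an algebraically closed field of characteristic zero and let n be a positive integer. Then every element of the general linear group GL_n(K) is a product of two diagonalizable matrices; that is, for every invertible n×n matrix M over K there exist invertible matrices S₁ and S₂, each conjugate to a diagonal matrix, with M = S₁ · S₂. -/
/-- A square matrix is diagonalizable (semisimple) if it is conjugate to a diagonal matrix. -/
def Matrix.IsDiagonalizable {n : ℕ} {K : Type*} [Field K]
    (M : Matrix (Fin n) (Fin n) K) : Prop :=
  ∃ P : (Matrix (Fin n) (Fin n) K)ˣ, ∃ d : Fin n → K,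
    M = (P : Matrix (Fin n) (Fin n) K) * Matrix.diagonal d *
      ((P⁻¹ : (Matrix (Fin n) (Fin n) K)ˣ) : Matrix (Fin n) (Fin n) K)

/-!
Conjugate `M` to an upper triangular matrix `U`, whose diagonal entries are nonzero. For distinct
nonzero scalars `cᵢ`, put `D = diag (Uᵢᵢ / cᵢ)`. Then `D⁻¹ * U` is upper triangular with the
distinct diagonal entries `cᵢ`, hence diagonalizable, and `U = D * (D⁻¹ * U)`.
-/

open Module Matrix Polynomial

section Triangularization

theorem flag_mkFinSnoc_castSucc {R M : Type*} [Ring R] [AddCommGroup M] [Module R M] {n : ℕ}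
    {N : Submodule R M} (b : Basis (Fin n) R N) (y : M)
    (hli : ∀ c : R, ∀ x ∈ N, c • y + x = 0 → c = 0) (hsp : ∀ z : M, ∃ c : R, z + c • y ∈ N)
    (k : Fin (n + 1)) :
    (b.mkFinSnoc y hli hsp).flag k.castSucc = (b.flag k).map N.subtype := by
  have hinit : {i : Fin (n + 1) | i.castSucc < k.castSucc} =
      Fin.castSucc '' {i : Fin n | i.castSucc < k} := by
    ext i
    cases i using Fin.lastCases with
    | last => simp [Fin.le_last]
    | cast i => simp
  rw [Basis.flag, Basis.flag, Submodule.map_span, hinit, Set.image_image, Set.image_image]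
  simp

theorem isUpperTriangular_toMatrix_of_flag_mem_invtSubmodule {R M : Type*} [CommRing R]
    [AddCommGroup M] [Module R M] {n : ℕ} {b : Basis (Fin n) R M} {f : End R M}
    (hf : ∀ k, b.flag k ∈ f.invtSubmodule) : (LinearMap.toMatrix b b f).IsUpperTriangular := by
  intro i j hji
  have hfj : f (b j) ∈ b.flag j.succ := hf j.succ (b.self_mem_flag j.castSucc_lt_succ)
  rw [LinearMap.toMatrix_apply]
  exact b.flag_le_ker_coord (Fin.succ_le_castSucc_iff.2 hji) hfj

theorem coe_aeval_restrict_apply {R M : Type*} [CommSemiring R] [AddCommMonoid M] [Module R M]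
    {f : End R M} {p : Submodule R M} (hp : ∀ x ∈ p, f x ∈ p) (q : R[X]) (x : p) :
    (aeval (f.restrict hp) q x : M) = aeval f q x := by
  induction q using Polynomial.induction_on' with
  | add q r hq hr => simp [hq, hr]
  | monomial k a => simp [aeval_monomial, End.pow_restrict k hp]

theorem ker_mem_invtSubmodule_of_hasEigenvector_dualMap {R M : Type*} [CommRing R]
    [AddCommGroup M] [Module R M] {f : End R M} {φ : Dual R M} {μ : R}
    (hφ : End.HasEigenvector (f.dualMap : End R (Dual R M)) μ φ) :
    LinearMap.ker φ ∈ f.invtSubmodule := fun x hx => by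
  have hφx : φ (f x) = μ * φ x := LinearMap.congr_fun hφ.apply_eq_smul x
  rw [Submodule.mem_comap, LinearMap.mem_ker, hφx, LinearMap.mem_ker.1 hx, mul_zero]

variable {K V : Type*} [Field K] [AddCommGroup V] [Module K V] {f : End K V}

theorem minpoly_restrict_dvd {p : Submodule K V} (hp : ∀ x ∈ p, f x ∈ p) :
    minpoly K (f.restrict hp) ∣ minpoly K f :=
  minpoly.dvd K _ (by ext x; simp [coe_aeval_restrict_apply])

variable [FiniteDimensional K V]

theorem exists_hasEigenvalue_of_splits_minpoly [Nontrivial V] (hf : (minpoly K f).Splits) :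
    ∃ μ, f.HasEigenvalue μ := by
  have hdegree : 0 < (minpoly K f).degree := minpoly.degree_pos (Algebra.IsIntegral.isIntegral f)
  obtain ⟨μ, hμ⟩ := hf.exists_eval_eq_zero hdegree.ne'
  exact ⟨μ, End.hasEigenvalue_of_isRoot hμ⟩

theorem hasEigenvalue_dualMap {μ : K} (hμ : f.HasEigenvalue μ) :
    End.HasEigenvalue (f.dualMap : End K (Dual K V)) μ := by
  rw [End.hasEigenvalue_iff, End.eigenspace_def, Ne, LinearMap.ker_eq_bot] at hμ ⊢
  have hdual : (f.dualMap - μ • 1 : End K (Dual K V)) = (f - μ • 1 : End K V).dualMap := by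
    ext φ x
    simp
  rwa [hdual, LinearMap.dualMap_injective_iff, ← LinearMap.injective_iff_surjective]

theorem exists_basis_flag_mem_invtSubmodule {n : ℕ} (hn : finrank K V = n)
    (hf : (minpoly K f).Splits) :
    ∃ b : Basis (Fin n) K V, ∀ k, b.flag k ∈ f.invtSubmodule := by
  induction n generalizing V with
  | zero => exact ⟨finBasisOfFinrankEq K V hn, fun k => by simp [Fin.fin_one_eq_zero k]⟩
  | succ n ih =>
    have : Nontrivial V := nontrivial_of_finrank_eq_succ hn
    -- The flag is built from the top down: an eigenvector of the transpose of `f` is a linear form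
    -- whose kernel is an `f`-invariant hyperplane.
    obtain ⟨μ, hμ⟩ := exists_hasEigenvalue_of_splits_minpoly hf
    obtain ⟨φ, hφ⟩ := (hasEigenvalue_dualMap hμ).exists_hasEigenvector
    have hinv : ∀ x ∈ LinearMap.ker φ, f x ∈ LinearMap.ker φ :=
      (End.mem_invtSubmodule_iff_forall_mem_of_mem f).1
        (ker_mem_invtSubmodule_of_hasEigenvector_dualMap hφ)
    have hrank : finrank K (LinearMap.ker φ) = n := by
      have := Dual.finrank_ker_add_one_of_ne_zero hφ.2
      lia
    have hsplits : (minpoly K (f.restrict hinv)).Splits :=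
      hf.of_dvd (minpoly.ne_zero_of_finite K f) (minpoly_restrict_dvd hinv)
    obtain ⟨b, hb⟩ := ih hrank hsplits
    obtain ⟨y, hy⟩ : ∃ y, φ y ≠ 0 := DFunLike.ne_iff.1 hφ.2
    have hli (c : K) (x : V) (hx : x ∈ LinearMap.ker φ) (h : c • y + x = 0) : c = 0 := by
      simpa [LinearMap.mem_ker.1 hx, hy] using congrArg φ h
    have hsp (z : V) : ∃ c : K, z + c • y ∈ LinearMap.ker φ := ⟨-(φ z / φ y), by simp [hy]⟩
    refine ⟨b.mkFinSnoc y hli hsp, fun k => ?_⟩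
    cases k using Fin.lastCases with
    | last => simp
    | cast k =>
      rw [flag_mkFinSnoc_castSucc]
      exact End.invtSubmodule.map_subtype_mem_of_mem_invtSubmodule f hinv (hb k)

end Triangularization

section Conjugation

theorem exists_eq_conj_toMatrix {R ι : Type*} [CommRing R] [Fintype ι] [DecidableEq ι]
    (M : Matrix ι ι R) (b : Basis ι R (ι → R)) :
    ∃ P : GL ι R, M = P.val * LinearMap.toMatrix b b (toLin' M) * P⁻¹.val := by
  let e := Pi.basisFun R ι
  refine ⟨⟨e.toMatrix b, b.toMatrix e, e.toMatrix_mul_toMatrix_flip b,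
    b.toMatrix_mul_toMatrix_flip e⟩, ?_⟩
  rw [Units.inv_mk, basis_toMatrix_mul_linearMap_toMatrix_mul_basis_toMatrix,
    LinearMap.toMatrix_eq_toMatrix', LinearMap.toMatrix'_toLin']

variable {K : Type*} [Field K] {n : ℕ}

theorem exists_eq_conj_isUpperTriangular {M : Matrix (Fin n) (Fin n) K}
    (hM : (minpoly K M).Splits) :
    ∃ (P : GL (Fin n) K) (U : Matrix (Fin n) (Fin n) K),
      U.IsUpperTriangular ∧ M = P.val * U * P⁻¹.val := by
  rw [← minpoly_toLin'] at hM
  obtain ⟨b, hb⟩ := exists_basis_flag_mem_invtSubmodule (finrank_fin_fun K) hM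
  obtain ⟨P, hP⟩ := exists_eq_conj_toMatrix M b
  exact ⟨P, _, isUpperTriangular_toMatrix_of_flag_mem_invtSubmodule hb, hP⟩

theorem isDiagonalizable_diagonal (d : Fin n → K) : (diagonal d).IsDiagonalizable :=
  ⟨1, d, by simp⟩

theorem isDiagonalizable_conj {M : Matrix (Fin n) (Fin n) K} (hM : M.IsDiagonalizable)
    (P : GL (Fin n) K) : (P.val * M * P⁻¹.val).IsDiagonalizable := by
  obtain ⟨Q, d, rfl⟩ := hM
  exact ⟨P * Q, d, by simp [mul_assoc]⟩

theorem isDiagonalizable_of_basis {M : Matrix (Fin n) (Fin n) K} {d : Fin n → K}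
    (b : Basis (Fin n) K (Fin n → K)) (hb : ∀ i, M *ᵥ b i = d i • b i) :
    M.IsDiagonalizable := by
  obtain ⟨P, hP⟩ := exists_eq_conj_toMatrix M b
  have hdiag : LinearMap.toMatrix b b (toLin' M) = diagonal d := by
    ext i j
    rcases eq_or_ne i j with rfl | hij
    · simp [LinearMap.toMatrix_apply, hb]
    · simp [LinearMap.toMatrix_apply, hb, hij]
  exact ⟨P, d, hdiag ▸ hP⟩

theorem isDiagonalizable_of_injective_hasEigenvalue {M : Matrix (Fin n) (Fin n) K} {d : Fin n → K}
    (hd : Function.Injective d) (hM : ∀ i, End.HasEigenvalue (toLin' M) (d i)) :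
    M.IsDiagonalizable := by
  choose v hv using fun i => (hM i).exists_hasEigenvector
  have hli : LinearIndependent K v := End.eigenvectors_linearIndependent' _ d hd v hv
  let b := basisOfLinearIndependentOfCardEqFinrank' v hli (by simp)
  exact isDiagonalizable_of_basis b fun i => by simpa [b] using (hv i).apply_eq_smul

theorem hasEigenvalue_toLin'_of_isUpperTriangular {ι : Type*} [Fintype ι] [LinearOrder ι]
    {M : Matrix ι ι K} (hM : M.IsUpperTriangular) (i : ι) :
    End.HasEigenvalue (toLin' M) (M i i) := by
  rw [End.hasEigenvalue_iff_isRoot_charpoly, charpoly_toLin', charpoly_of_isUpperTriangular M hM,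
    isRoot_prod]
  exact ⟨i, Finset.mem_univ i, by simp⟩

theorem isDiagonalizable_of_isUpperTriangular {M : Matrix (Fin n) (Fin n) K}
    (hM : M.IsUpperTriangular) (hd : Function.Injective M.diag) : M.IsDiagonalizable :=
  isDiagonalizable_of_injective_hasEigenvalue hd (hasEigenvalue_toLin'_of_isUpperTriangular hM)

theorem exists_eq_mul_isDiagonalizable_of_isUpperTriangular {c : Fin n → K}
    (hc : Function.Injective c) (hc₀ : ∀ i, c i ≠ 0) {U : GL (Fin n) K}
    (hU : U.val.IsUpperTriangular) :
    ∃ S₁ S₂ : GL (Fin n) K,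
      S₁.val.IsDiagonalizable ∧ S₂.val.IsDiagonalizable ∧ U = S₁ * S₂ := by
  have hUdiag (i : Fin n) : U i i ≠ 0 := by
    have hdet : ∏ i, U i i ≠ 0 := det_of_isUpperTriangular hU ▸ U.det_ne_zero
    exact Finset.prod_ne_zero_iff.1 hdet i (Finset.mem_univ i)
  let D : GL (Fin n) K :=
    ⟨diagonal fun i => U i i / c i, diagonal fun i => c i / U i i,
      by simp [hUdiag, hc₀], by simp [hUdiag, hc₀]⟩
  have htri : (D⁻¹ * U).val.IsUpperTriangular := (blockTriangular_diagonal _).mul hU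
  have hdiag (i : Fin n) : (D⁻¹ * U).val.diag i = c i := by simp [D, hUdiag]
  have hinj : Function.Injective (D⁻¹ * U).val.diag := fun i j hij =>
    hc ((hdiag i).symm.trans (hij.trans (hdiag j)))
  exact ⟨D, D⁻¹ * U, isDiagonalizable_diagonal _,
    isDiagonalizable_of_isUpperTriangular htri hinj, (mul_inv_cancel_left D U).symm⟩

end Conjugation

theorem stmt0_general {K : Type*} [Field K] {n : ℕ} (hn : n < ENat.card K) (M : GL (Fin n) K)
    (hM : (minpoly K M.val).Splits) :
    ∃ S₁ S₂ : GL (Fin n) K,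
      S₁.val.IsDiagonalizable ∧ S₂.val.IsDiagonalizable ∧ M = S₁ * S₂ := by
  obtain ⟨c, hc⟩ : ∃ c : Fin n ↪ K, Disjoint {0} (Set.range c) :=
    Fin.Embedding.exists_embedding_disjoint_range_of_add_le_ENat_card
      (by simpa [add_comm] using Order.add_one_le_of_lt hn)
  have hc₀ (i : Fin n) : c i ≠ 0 := fun h => Set.disjoint_singleton_left.1 hc ⟨i, h⟩
  obtain ⟨P, U, hU, hPU⟩ := exists_eq_conj_isUpperTriangular hM
  have hU' : (P⁻¹ * M * P).val = U := by simp [hPU, mul_assoc]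
  obtain ⟨S₁, S₂, hS₁, hS₂, hS⟩ :=
    exists_eq_mul_isDiagonalizable_of_isUpperTriangular c.injective hc₀ (hU' ▸ hU)
  refine ⟨P * S₁ * P⁻¹, P * S₂ * P⁻¹, isDiagonalizable_conj hS₁ P, isDiagonalizable_conj hS₂ P, ?_⟩
  calc M = P * (P⁻¹ * M * P) * P⁻¹ := by group
    _ = P * S₁ * P⁻¹ * (P * S₂ * P⁻¹) := by rw [hS]; group

/-- Every element of `GL n K` over an algebraically closed field of characteristic zero
is a product of two diagonalizable matrices. -/
theorem stmt0 (K : Type*) [Field K] [IsAlgClosed K] [CharZero K] (n : ℕ) (hn : 0 < n)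
    (M : GL (Fin n) K) :
    ∃ S₁ S₂ : GL (Fin n) K,
      Matrix.IsDiagonalizable (S₁ : Matrix (Fin n) (Fin n) K) ∧
      Matrix.IsDiagonalizable (S₂ : Matrix (Fin n) (Fin n) K) ∧
      M = S₁ * S₂ :=
  stmt0_general (by simp) M (IsAlgClosed.splits _)
end

section
/- Let K be an algebraically closed field of characteristic zero and let n be a positive integer. Then every n×n matrix M over K with determinant 1 is a product M = S₁ · S₂ of two diagonalizable matrices S₁, S₂ each of determinant 1. -/
/-!
Every invertible matrix over an infinite field is conjugate to a product `L * U` with `L` lower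
unitriangular and `U` upper triangular: some coordinate system makes the first pivot nonzero, and
one recurses on its Schur complement. For a diagonal matrix `D` of determinant `1`, rewrite this as
`(L * D) * (D⁻¹ * U)`. For generic `D` each factor is triangular with pairwise distinct diagonal
entries, hence diagonalizable.
-/

section

open Module Matrix Function

variable {K : Type*} [Field K] {n : ℕ}

section Diagonalizable

variable {M : Matrix (Fin n) (Fin n) K}

theorem isDiagonalizable_units_conj (hM : M.IsDiagonalizable) (Q : (Matrix (Fin n) (Fin n) K)ˣ) :
    (Q.val * M * Q⁻¹.val).IsDiagonalizable := by
  obtain ⟨P, d, rfl⟩ := hM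
  exact ⟨Q * P, d, by simp only [Units.val_mul, _root_.mul_inv_rev, mul_assoc]⟩

theorem isDiagonalizable_of_hasEigenvector {e : Fin n → K} {v : Fin n → Fin n → K}
    (he : Injective e) (hv : ∀ i, End.HasEigenvector (toLin' M) (e i) (v i)) :
    M.IsDiagonalizable := by
  have hunit : IsUnit (of v)ᵀ := linearIndependent_cols_iff_isUnit.mp
    (End.eigenvectors_linearIndependent' (toLin' M) e he v hv)
  refine ⟨hunit.unit, e, (Units.eq_mul_inv_iff_mul_eq _).mpr ?_⟩
  ext i j
  calc (M * (of v)ᵀ) i j = toLin' M (v j) i := rfl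
    _ = e j * v j i := congrFun (hv j).apply_eq_smul i
    _ = ((of v)ᵀ * diagonal e) i j := by rw [mul_diagonal, transpose_apply, of_apply, mul_comm]

theorem isDiagonalizable_of_charpoly_eq_prod {e : Fin n → K} (he : Injective e)
    (hM : M.charpoly = ∏ i, (Polynomial.X - Polynomial.C (e i))) : M.IsDiagonalizable := by
  have hroot (i : Fin n) : End.HasEigenvalue (toLin' M) (e i) := by
    rw [End.hasEigenvalue_iff_isRoot_charpoly, charpoly_toLin', hM, Polynomial.IsRoot.def,
      Polynomial.eval_prod]
    exact Finset.prod_eq_zero (Finset.mem_univ i) (by simp)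
  choose v hv using fun i => (hroot i).exists_hasEigenvector
  exact isDiagonalizable_of_hasEigenvector he hv

theorem isDiagonalizable_of_isUpperTriangular_s1 (hM : M.IsUpperTriangular)
    (hd : Injective fun i => M i i) : M.IsDiagonalizable :=
  isDiagonalizable_of_charpoly_eq_prod hd (charpoly_of_isUpperTriangular M hM)

theorem isDiagonalizable_of_isLowerTriangular (hM : M.IsLowerTriangular)
    (hd : Injective fun i => M i i) : M.IsDiagonalizable := by
  refine isDiagonalizable_of_charpoly_eq_prod hd ?_
  have hMt : Mᵀ.IsUpperTriangular := hM.transpose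
  rw [← charpoly_transpose, charpoly_of_isUpperTriangular Mᵀ hMt]
  rfl

end Diagonalizable

section LU

theorem isLowerTriangular_of_vecCons {L : Matrix (Fin n) (Fin n) K} (hL : L.IsLowerTriangular)
    (a : K) (c : Fin n → K) :
    (of (vecCons (vecCons a 0) fun i => vecCons (c i) (L i))).IsLowerTriangular := by
  intro i j hij
  replace hij : i < j := hij
  obtain ⟨j, rfl⟩ := Fin.exists_succ_eq.mpr (Fin.ne_zero_of_lt hij)
  cases i using Fin.cases with
  | zero => rfl
  | succ i => exact hL (Fin.succ_lt_succ_iff.mp hij)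

theorem isUpperTriangular_of_vecCons {U : Matrix (Fin n) (Fin n) K} (hU : U.IsUpperTriangular)
    (a : K) (r : Fin n → K) :
    (of (vecCons (vecCons a r) fun i => vecCons 0 (U i))).IsUpperTriangular := by
  intro i j hij
  replace hij : j < i := hij
  obtain ⟨i, rfl⟩ := Fin.exists_succ_eq.mpr (Fin.ne_zero_of_lt hij)
  cases j using Fin.cases with
  | zero => rfl
  | succ j => exact hU (Fin.succ_lt_succ_iff.mp hij)

/-- `M` has an LU decomposition: it is the product of a lower unitriangular and an upper triangular
matrix. -/
def HasLUDecomposition (M : Matrix (Fin n) (Fin n) K) : Prop :=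
  ∃ L U : Matrix (Fin n) (Fin n) K,
    L.IsLowerTriangular ∧ (∀ i, L i i = 1) ∧ U.IsUpperTriangular ∧ M = L * U

/-- The Schur complement of the top left entry of a matrix. It is only meaningful when that entry
is nonzero. -/
def schurComplement (M : Matrix (Fin (n + 1)) (Fin (n + 1)) K) : Matrix (Fin n) (Fin n) K :=
  of fun i j => M i.succ j.succ - M 0 j.succ / M 0 0 * M i.succ 0

theorem HasLUDecomposition.of_schurComplement {M : Matrix (Fin (n + 1)) (Fin (n + 1)) K}
    (hpivot : M 0 0 ≠ 0) (hM : HasLUDecomposition (schurComplement M)) :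
    HasLUDecomposition M := by
  obtain ⟨L, U, hL, hL1, hU, hLU⟩ := hM
  let L' : Matrix (Fin (n + 1)) (Fin (n + 1)) K :=
    of (vecCons (vecCons 1 0) fun i => vecCons (M i.succ 0 / M 0 0) (L i))
  let U' : Matrix (Fin (n + 1)) (Fin (n + 1)) K :=
    of (vecCons (vecCons (M 0 0) fun j => M 0 j.succ) fun i => vecCons 0 (U i))
  refine ⟨L', U', isLowerTriangular_of_vecCons hL _ _, Fin.cases rfl hL1,
    isUpperTriangular_of_vecCons hU _ _, ?_⟩
  ext i j
  rw [mul_apply, Fin.sum_univ_succ]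
  cases i using Fin.cases with
  | zero => cases j using Fin.cases <;> simp [L', U']
  | succ i =>
    cases j using Fin.cases with
    | zero => simp [L', U', hpivot]
    | succ j =>
      have hij := congrFun (congrFun hLU i) j
      simp only [schurComplement, of_apply, mul_apply] at hij
      simp only [L', U', of_apply, cons_val_succ, cons_val_zero, ← hij]
      ring

end LU

section ConjugateToLU

variable {V : Type*} [AddCommGroup V] [Module K V]

theorem exists_dual_apply_eq_one_apply_map_ne_zero [Infinite K] {f : End K V} (hf : f ≠ 0) :
    ∃ (x : V) (φ : Dual K V), φ x = 1 ∧ φ (f x) ≠ 0 := by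
  obtain ⟨x, hfx⟩ : ∃ x, f x ≠ 0 := by simpa using DFunLike.ne_iff.mp hf
  have hx : x ≠ 0 := fun h => hfx (by rw [h, map_zero])
  obtain ⟨φ, hφ⟩ := exists_dual_forall_apply_ne_zero (K := K) ![x, f x] (by simp [hx, hfx])
  have hφx : φ x ≠ 0 := hφ 0
  have hφfx : φ (f x) ≠ 0 := hφ 1
  exact ⟨x, (φ x)⁻¹ • φ, inv_mul_cancel₀ hφx, mul_ne_zero (inv_ne_zero hφx) hφfx⟩

section Basis

variable {φ : Dual K V} {x : V}

/-- The basis of `V` obtained by prepending `x` to a basis of the hyperplane `ker φ`, where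
`φ x = 1`; its first coordinate function is `φ`. -/
noncomputable def basisConsKer (hx : φ x = 1) (b : Basis (Fin n) K (LinearMap.ker φ)) :
    Basis (Fin (n + 1)) K V :=
  Basis.mkFinCons x b
    (fun a w hw h => by simpa [hx, LinearMap.mem_ker.mp hw] using congrArg φ h)
    (fun z => ⟨-φ z, by simp [hx]⟩)

variable (hx : φ x = 1) (b : Basis (Fin n) K (LinearMap.ker φ))

theorem basisConsKer_zero : basisConsKer hx b 0 = x := by simp [basisConsKer]

theorem basisConsKer_succ (i : Fin n) : basisConsKer hx b i.succ = b i := by simp [basisConsKer]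

theorem basisConsKer_repr_zero (v : V) : (basisConsKer hx b).repr v 0 = φ v := by
  suffices (basisConsKer hx b).coord 0 = φ from LinearMap.congr_fun this v
  refine (basisConsKer hx b).ext (Fin.cases ?_ fun i => ?_)
  · rw [Basis.coord_apply, Basis.repr_self, basisConsKer_zero, hx, Finsupp.single_eq_same]
  · rw [Basis.coord_apply, Basis.repr_self, basisConsKer_succ, LinearMap.mem_ker.mp (b i).2]
    exact Finsupp.single_eq_of_ne (Fin.succ_ne_zero i).symm

theorem basisConsKer_repr_coe_succ (w : LinearMap.ker φ) (i : Fin n) :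
    (basisConsKer hx b).repr w i.succ = b.repr w i := by
  suffices (basisConsKer hx b).coord i.succ ∘ₗ (LinearMap.ker φ).subtype = b.coord i from
    LinearMap.congr_fun this w
  refine b.ext fun j => ?_
  simp [← basisConsKer_succ hx b, Finsupp.single_apply]

end Basis

/-- The Schur complement of `f` on the hyperplane `ker φ` with respect to the pivot `φ (f x)`: the
projection along `f x` of `f` to `ker φ`. -/
def endSchurComplement (f : End K V) {φ : Dual K V} {x : V} (hpivot : φ (f x) ≠ 0) :
    End K (LinearMap.ker φ) :=
  LinearMap.codRestrict (LinearMap.ker φ)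
    ((f - ((φ (f x))⁻¹ • φ ∘ₗ f).smulRight (f x)) ∘ₗ (LinearMap.ker φ).subtype)
    fun w => by simp [hpivot, mul_right_comm]

variable {f : End K V} {φ : Dual K V} {x : V} (hpivot : φ (f x) ≠ 0)

theorem coe_endSchurComplement_apply (w : LinearMap.ker φ) :
    (endSchurComplement f hpivot w : V) = f w - (φ (f w) / φ (f x)) • f x := by
  simp only [div_eq_inv_mul]
  rfl

theorem endSchurComplement_injective (hx : φ x = 1) (hf : Injective f) :
    Injective (endSchurComplement f hpivot) := by
  refine (injective_iff_map_eq_zero _).mpr fun w hw => Subtype.ext ?_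
  set a := φ (f w) / φ (f x)
  have hfw : f w = f (a • x) := by
    rw [map_smul, ← sub_eq_zero, ← coe_endSchurComplement_apply hpivot, hw, ZeroMemClass.coe_zero]
  have hwx : (w : V) = a • x := hf hfw
  have ha : a = 0 := by simpa [hx, LinearMap.mem_ker.mp w.2] using (congrArg φ hwx).symm
  rw [hwx, ha, zero_smul, ZeroMemClass.coe_zero]

theorem toMatrix_endSchurComplement (hx : φ x = 1) (b : Basis (Fin n) K (LinearMap.ker φ)) :
    LinearMap.toMatrix b b (endSchurComplement f hpivot) =
      schurComplement (LinearMap.toMatrix (basisConsKer hx b) (basisConsKer hx b) f) := by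
  ext i j
  rw [LinearMap.toMatrix_apply, ← basisConsKer_repr_coe_succ hx, coe_endSchurComplement_apply]
  simp [schurComplement, LinearMap.toMatrix_apply, basisConsKer_zero, basisConsKer_succ,
    basisConsKer_repr_zero]

theorem exists_basis_hasLUDecomposition_toMatrix [Infinite K] [FiniteDimensional K V]
    (hV : finrank K V = n) (hf : Injective f) :
    ∃ b : Basis (Fin n) K V, HasLUDecomposition (LinearMap.toMatrix b b f) := by
  induction n generalizing V with
  | zero =>
    exact ⟨finBasisOfFinrankEq K V hV, 1, 1, blockTriangular_one, fun _ => one_apply_eq _,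
      blockTriangular_one, Subsingleton.elim _ _⟩
  | succ n ih =>
    have : Nontrivial V := nontrivial_of_finrank_pos (R := K) (by omega)
    have hf0 : f ≠ 0 := by
      rintro rfl
      obtain ⟨v, hv⟩ := exists_ne (0 : V)
      exact hv (hf rfl)
    obtain ⟨x, φ, hx, hpivot⟩ := exists_dual_apply_eq_one_apply_map_ne_zero hf0
    have hker : finrank K (LinearMap.ker φ) = n := by
      have hφ : φ ≠ 0 := fun h => by simp [h] at hx
      have := Dual.finrank_ker_add_one_of_ne_zero hφ
      omega
    obtain ⟨b, hb⟩ := ih hker (endSchurComplement_injective hpivot hx hf)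
    rw [toMatrix_endSchurComplement hpivot hx] at hb
    refine ⟨basisConsKer hx b, .of_schurComplement ?_ hb⟩
    rwa [LinearMap.toMatrix_apply, basisConsKer_repr_zero, basisConsKer_zero]

theorem exists_hasLUDecomposition_units_conj [Infinite K] {M : Matrix (Fin n) (Fin n) K}
    (hM : M.det ≠ 0) :
    ∃ (P : (Matrix (Fin n) (Fin n) K)ˣ) (N : Matrix (Fin n) (Fin n) K),
      HasLUDecomposition N ∧ M = P.val * N * P⁻¹.val := by
  have hinj : Injective (toLin' M) :=
    mulVec_injective_iff_isUnit.mpr ((isUnit_iff_isUnit_det M).mpr hM.isUnit)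
  obtain ⟨b, hb⟩ := exists_basis_hasLUDecomposition_toMatrix (finrank_fin_fun K) hinj
  let s := Pi.basisFun K (Fin n)
  refine ⟨⟨s.toMatrix b, b.toMatrix s, s.toMatrix_mul_toMatrix_flip b,
    b.toMatrix_mul_toMatrix_flip s⟩, _, hb, ?_⟩
  calc M = LinearMap.toMatrix s s (toLin' M) := (LinearMap.toMatrix'_toLin' M).symm
    _ = s.toMatrix b * LinearMap.toMatrix b b (toLin' M) * b.toMatrix s :=
      (basis_toMatrix_mul_linearMap_toMatrix_mul_basis_toMatrix s b s b _).symm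

end ConjugateToLU

section GenericScaling

theorem finite_setOf_not_injective_mul_pow {ι : Type*} [Finite ι] {w : ι → K} (hw : ∀ i, w i ≠ 0)
    {k : ι → ℕ} (hk : Injective k) : {t : K | ¬ Injective fun i => w i * t ^ k i}.Finite := by
  let p (i j : ι) : Polynomial K := .monomial (k i) (w i) - .monomial (k j) (w j)
  have hp (i j : ι) (hij : i ≠ j) : p i j ≠ 0 := fun h => hw i <| by
    simpa [p, Polynomial.coeff_monomial, hk.ne hij.symm] using congrArg (·.coeff (k i)) h
  have hroots : (⋃ (i) (j) (_ : i ≠ j), {t | (p i j).IsRoot t}).Finite :=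
    Set.finite_iUnion fun i => Set.finite_iUnion fun j => Set.finite_iUnion fun hij =>
      Polynomial.finite_setOfPred_isRoot (hp i j hij)
  refine hroots.subset fun t ht => ?_
  obtain ⟨i, j, heq, hij⟩ := not_injective_iff.mp ht
  refine Set.mem_iUnion₂.mpr ⟨i, j, Set.mem_iUnion.mpr ⟨hij, ?_⟩⟩
  simpa [p, sub_eq_zero] using heq

theorem exists_prod_eq_one_injective_injective_div [Infinite K] {u : Fin n → K}
    (hu : ∀ i, u i ≠ 0) :
    ∃ d : Fin n → K, ∏ i, d i = 1 ∧ Injective d ∧ Injective fun i => u i / d i := by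
  have hfin₁ := finite_setOf_not_injective_mul_pow (w := fun _ : Fin n => (1 : K))
    (fun _ => one_ne_zero) (k := fun i => 2 * (i : ℕ)) fun i j h => by grind
  have hfin₂ := finite_setOf_not_injective_mul_pow hu (k := fun i => 2 * (i.rev : ℕ))
    fun i j h => by grind
  obtain ⟨t, ht⟩ := ((hfin₁.union hfin₂).union (Set.finite_singleton 0)).exists_notMem
  simp only [Set.mem_union, Set.mem_ofPred_eq, Set.mem_singleton_iff, not_or, not_not,
    one_mul] at ht
  obtain ⟨⟨ht₁, ht₂⟩, ht0⟩ := ht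
  have hpow (i : Fin n) : t ^ (n - 1) = t ^ (i : ℕ) * t ^ (i.rev : ℕ) := by
    rw [← pow_add]
    congr 1
    grind
  -- Multiplying by the constant `t ^ (n - 1)` clears the denominators of both families.
  refine ⟨fun i => t ^ (i : ℕ) / t ^ (i.rev : ℕ), ?_, ?_, ?_⟩
  · have hrev : ∏ i : Fin n, t ^ (i.rev : ℕ) = ∏ i : Fin n, t ^ (i : ℕ) :=
      Equiv.prod_comp Fin.revPerm fun i : Fin n => t ^ (i : ℕ)
    rw [Finset.prod_div_distrib, hrev]
    exact div_self (Finset.prod_ne_zero_iff.mpr fun i _ => pow_ne_zero _ ht0)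
  · refine Injective.of_comp (f := (· * t ^ (n - 1))) ?_
    convert ht₁ using 2 with i
    rw [Function.comp_apply, hpow i, pow_mul']
    field_simp
  · refine Injective.of_comp (f := (· * t ^ (n - 1))) ?_
    convert ht₂ using 2 with i
    rw [Function.comp_apply, hpow i, pow_mul']
    field_simp

end GenericScaling

theorem HasLUDecomposition.exists_isDiagonalizable_mul [Infinite K] {N : Matrix (Fin n) (Fin n) K}
    (hN : HasLUDecomposition N) (hdet : N.det ≠ 0) :
    ∃ S₁ S₂ : Matrix (Fin n) (Fin n) K,
      S₁.IsDiagonalizable ∧ S₂.IsDiagonalizable ∧ S₁.det = 1 ∧ N = S₁ * S₂ := by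
  obtain ⟨L, U, hL, hL1, hU, rfl⟩ := hN
  have hUdiag (i : Fin n) : U i i ≠ 0 := by
    have hUdet : U.det ≠ 0 := right_ne_zero_of_mul (det_mul L U ▸ hdet)
    rw [det_of_isUpperTriangular hU] at hUdet
    exact Finset.prod_ne_zero_iff.mp hUdet i (Finset.mem_univ i)
  obtain ⟨d, hprod, hd, hUd⟩ := exists_prod_eq_one_injective_injective_div hUdiag
  have hd0 (i : Fin n) : d i ≠ 0 :=
    Finset.prod_ne_zero_iff.mp (hprod.trans_ne one_ne_zero) i (Finset.mem_univ i)
  have hcancel : diagonal d * diagonal d⁻¹ = 1 := by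
    rw [diagonal_mul_diagonal, ← diagonal_one]
    exact congrArg diagonal (funext fun i => mul_inv_cancel₀ (hd0 i))
  refine ⟨L * diagonal d, diagonal d⁻¹ * U,
    isDiagonalizable_of_isLowerTriangular (hL.mul (blockTriangular_diagonal d)) ?_,
    isDiagonalizable_of_isUpperTriangular_s1 ((blockTriangular_diagonal d⁻¹).mul hU) ?_, ?_, ?_⟩
  · simpa only [mul_diagonal, hL1, one_mul] using hd
  · simpa only [diagonal_mul, Pi.inv_apply, ← div_eq_inv_mul] using hUd
  · rw [det_mul, det_of_isLowerTriangular L hL, det_diagonal, hprod]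
    simp only [hL1, Finset.prod_const_one, mul_one]
  · rw [mul_assoc, ← mul_assoc (diagonal d), hcancel, one_mul]

theorem stmt1_general [Infinite K] {M : Matrix (Fin n) (Fin n) K} (hM : M.det ≠ 0) :
    ∃ S₁ S₂ : Matrix (Fin n) (Fin n) K,
      S₁.IsDiagonalizable ∧ S₂.IsDiagonalizable ∧ S₁.det = 1 ∧ S₂.det = M.det ∧ M = S₁ * S₂ := by
  obtain ⟨P, N, hN, rfl⟩ := exists_hasLUDecomposition_units_conj hM
  rw [det_units_conj] at hM ⊢
  obtain ⟨S₁, S₂, h₁, h₂, hdet, rfl⟩ := hN.exists_isDiagonalizable_mul hM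
  refine ⟨_, _, isDiagonalizable_units_conj h₁ P, isDiagonalizable_units_conj h₂ P, ?_, ?_, ?_⟩
  · rw [det_units_conj, hdet]
  · rw [det_units_conj, det_mul, hdet, one_mul]
  · simp only [mul_assoc, Units.inv_mul_cancel_left]

end

/-- Every matrix of determinant 1 over an algebraically closed field of characteristic zero
is a product of two diagonalizable matrices of determinant 1. -/
theorem stmt1 (K : Type*) [Field K] [IsAlgClosed K] [CharZero K] (n : ℕ) (hn : 0 < n)
    (M : Matrix (Fin n) (Fin n) K) (hM : M.det = 1) :
    ∃ S₁ S₂ : Matrix (Fin n) (Fin n) K,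
      Matrix.IsDiagonalizable S₁ ∧ Matrix.IsDiagonalizable S₂ ∧
      S₁.det = 1 ∧ S₂.det = 1 ∧ M = S₁ * S₂ := by
  simpa only [hM] using stmt1_general (hM.trans_ne one_ne_zero)
end

section
/- Let K be an algebraically closed field of characteristic zero and let n be a positive integer. Then every element M of the symplectic group Sp_{2n}(K) (the group of 2n×2n matrices M over K with Mᵀ J M = J for the standard symplectic form J) is a product M = S₁ · S₂ of two elements S₁, S₂ of Sp_{2n}(K) each of which is diagonalizable as a matrix. -/
open Matrix
/-- A square matrix is diagonalizable (semisimple) if it is conjugate to a diagonal matrix. -/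
def Matrix.IsDiagonalizableSq {m : Type*} [Fintype m] [DecidableEq m] {K : Type*} [Field K]
    (M : Matrix m m K) : Prop :=
  ∃ P : (Matrix m m K)ˣ, ∃ d : m → K,
    M = (P : Matrix m m K) * Matrix.diagonal d * ((P⁻¹ : (Matrix m m K)ˣ) : Matrix m m K)

/-- The standard symplectic form on a space indexed by `Fin n ⊕ Fin n`. -/
def stdSymplecticJ (n : ℕ) (K : Type*) [Field K] :
    Matrix (Fin n ⊕ Fin n) (Fin n ⊕ Fin n) K :=
  Matrix.fromBlocks 0 1 (-1) 0

/-!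
A symplectic matrix `M` whose characteristic polynomial splits stabilises a full flag of isotropic
subspaces: as long as an isotropic `M`-stable `W` is not Lagrangian, `M` has an eigenvector in
`Wᗮ / W`. Completing an adapted basis of the flag to a symplectic basis conjugates `M`, inside the
symplectic group, to a block upper triangular matrix `fromBlocks A B 0 D` with `A` upper triangular
and `D = (Aᵀ)⁻¹`, whose eigenvalues are the diagonal entries of `A` and their inverses. Multiplying
by `T = diag (t, t⁻¹)` for a suitable `t` replaces the diagonal of `A` by any prescribed nonzero
entries `e`; when the `e i` and `(e i)⁻¹` are pairwise distinct, `M * T` has distinct eigenvalues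
and `M = (M * T) * T⁻¹` is the required factorisation.
-/

open Polynomial Module

section Diagonalizable

variable {m K : Type*} [Fintype m] [DecidableEq m] [Field K]

theorem isDiagonalizableSq_diagonal (d : m → K) : (diagonal d).IsDiagonalizableSq :=
  ⟨1, d, by simp⟩

theorem isDiagonalizableSq_conj {M : Matrix m m K} (hM : M.IsDiagonalizableSq)
    (P : (Matrix m m K)ˣ) :
    (P * M * (P⁻¹ : (Matrix m m K)ˣ) : Matrix m m K).IsDiagonalizableSq := by
  obtain ⟨R, d, rfl⟩ := hM
  exact ⟨P * R, d, by simp [Matrix.mul_assoc]⟩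

theorem isDiagonalizableSq_of_injective_of_mem_spectrum {M : Matrix m m K} {e : m → K}
    (he : Function.Injective e) (hmem : ∀ i, e i ∈ spectrum K M) : M.IsDiagonalizableSq := by
  have hev (i : m) : ∃ v, End.HasEigenvector M.toLin' (e i) v :=
    (End.hasEigenvalue_iff_mem_spectrum.2 (M.spectrum_toLin' ▸ hmem i)).exists_hasEigenvector
  choose v hv using hev
  obtain ⟨P, hP⟩ : IsUnit (of v)ᵀ := linearIndependent_cols_iff_isUnit.1 <|
    End.eigenvectors_linearIndependent' _ e he v hv
  refine ⟨P, e, ?_⟩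
  rw [Units.eq_mul_inv_iff_mul_eq, hP]
  ext i j
  have hvj : (M *ᵥ v j) i = e j * v j i := congrFun (hv j).apply_eq_smul i
  rw [mul_diagonal, transpose_apply, of_apply, mul_comm, ← hvj]
  rfl

end Diagonalizable

theorem exists_injective_sumElim_inv (l K : Type*) [Finite l] [Field K] [Infinite K] :
    ∃ e : l → K, Function.Injective (Sum.elim e e⁻¹) := by
  classical
  let r (x y : K) : Prop := x ≠ y ∧ x ≠ y⁻¹
  have : Std.Symm r := ⟨fun x y h => ⟨h.1.symm, fun hxy => h.2 (inv_eq_iff_eq_inv.1 hxy.symm)⟩⟩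
  obtain ⟨f, hself, hpair⟩ : ∃ f : ℕ → K, (∀ k, f k ≠ (f k)⁻¹) ∧ Pairwise (Function.onFun r f) := by
    refine exists_seq_of_forall_finset_exists' (fun y => y ≠ y⁻¹) r fun s _ => ?_
    obtain ⟨y, hy⟩ := Infinite.exists_notMem_finset ({0, 1, -1} ∪ s ∪ s.image (·⁻¹))
    simp only [Finset.mem_union, Finset.mem_insert, Finset.mem_singleton, Finset.mem_image,
      not_or, not_exists, not_and] at hy
    obtain ⟨⟨⟨hy0, hy1, hy1'⟩, hys⟩, hys'⟩ := hy
    refine ⟨y, fun h => ?_, fun x hx => ⟨fun h => hys (h ▸ hx), fun h => hys' x hx ?_⟩⟩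
    · exact (mul_self_eq_one_iff.1 ((mul_inv_cancel₀ hy0 ▸ congrArg (y * ·) h))).elim hy1 hy1'
    · rw [h, inv_inv]
  obtain ⟨n, ⟨φ⟩⟩ := Finite.exists_equiv_fin l
  have hφ {i j : l} (hij : i ≠ j) : r (f (φ i)) (f (φ j)) :=
    hpair fun h => hij (φ.injective (Fin.ext h))
  have hinj : Function.Injective fun i => f (φ i) := fun i j h =>
    by_contra fun hij => (hφ hij).1 h
  refine ⟨fun i => f (φ i), hinj.sumElim (inv_injective.comp hinj) fun i j h => ?_⟩
  obtain rfl | hij := eq_or_ne i j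
  · exact hself _ h
  · exact (hφ hij).2 h

section Flags

variable {R V : Type*} [CommRing R] [AddCommGroup V] [Module R V]
variable {B : LinearMap.BilinForm R V} {g : End R V}

theorem injective_of_isOrthogonal (hB : B.Nondegenerate) (hg : B.IsOrthogonal g) :
    Function.Injective g :=
  (injective_iff_map_eq_zero g).2 fun x hx => hB.1 x fun y => by
    rw [← hg, hx, map_zero, LinearMap.zero_apply]

theorem mem_orthogonal_span_range_iff {ι : Type*} {v : ι → V} {x : V} :
    x ∈ B.orthogonal (Submodule.span R (Set.range v)) ↔ ∀ i, B (v i) x = 0 := by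
  refine ⟨fun h i => h _ (Submodule.subset_span ⟨i, rfl⟩), fun h => ?_⟩
  suffices Submodule.span R (Set.range v) ≤ LinearMap.ker (B.flip x) from fun w hw => this hw
  exact Submodule.span_le.2 (Set.range_subset_iff.2 h)

/-- The family `v` is adapted to a `g`-stable flag of isotropic subspaces: the members of the flag
are the spans of the initial segments `v '' Set.Iic i`. -/
structure IsIsotropicFlag (B : LinearMap.BilinForm R V) (g : End R V) {ι : Type*} [Preorder ι]
    (v : ι → V) : Prop where
  linearIndependent : LinearIndependent R v
  isotropic : ∀ i j, B (v i) (v j) = 0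
  apply_mem_span : ∀ i, g (v i) ∈ Submodule.span R (v '' Set.Iic i)

namespace IsIsotropicFlag

theorem comp_orderIso {ι κ : Type*} [Preorder ι] [Preorder κ] {v : ι → V}
    (h : IsIsotropicFlag B g v) (φ : κ ≃o ι) : IsIsotropicFlag B g (v ∘ φ) where
  linearIndependent := h.linearIndependent.comp φ φ.injective
  isotropic i j := h.isotropic (φ i) (φ j)
  apply_mem_span i := by
    rw [Set.image_comp, φ.image_Iic]
    exact h.apply_mem_span (φ i)

theorem span_range_mem_invtSubmodule {ι : Type*} [Preorder ι] {v : ι → V}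
    (h : IsIsotropicFlag B g v) : Submodule.span R (Set.range v) ∈ g.invtSubmodule := by
  refine Submodule.span_le.2 (Set.range_subset_iff.2 fun i => ?_)
  exact Submodule.span_mono (Set.image_subset_range _ _) (h.apply_mem_span i)

end IsIsotropicFlag

end Flags

section FlagsOverField

variable {K V : Type*} [Field K] [AddCommGroup V] [Module K V]
variable {B : LinearMap.BilinForm K V} {g : End K V}

theorem IsIsotropicFlag.snoc {k : ℕ} {v : Fin k → V} (h : IsIsotropicFlag B g v) (hB : B.IsAlt)
    {x : V} (hx : x ∉ Submodule.span K (Set.range v)) (hvx : ∀ i, B (v i) x = 0) {μ : K}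
    (hgx : g x - μ • x ∈ Submodule.span K (Set.range v)) :
    IsIsotropicFlag B g (Fin.snoc v x : Fin (k + 1) → V) where
  linearIndependent := h.linearIndependent.finSnoc hx
  isotropic := by
    have hxv (i : Fin k) : B x (v i) = 0 := hB.isRefl _ _ (hvx i)
    simp [Fin.forall_fin_succ', h.isotropic, hvx, hxv, hB.self_eq_zero]
  apply_mem_span := by
    refine Fin.forall_fin_succ'.2 ⟨fun i => ?_, ?_⟩
    · rw [Fin.snoc_castSucc]
      refine Submodule.span_mono ?_ (h.apply_mem_span i)
      rintro _ ⟨j, hj, rfl⟩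
      exact ⟨j.castSucc, by simpa using hj, by simp⟩
    · rw [Fin.snoc_last, ← Fin.top_eq_last, Set.Iic_top, Set.image_univ, Fin.range_snoc,
        ← sub_add_cancel (g x) (μ • x)]
      exact add_mem (Submodule.span_mono (Set.subset_insert _ _) hgx)
        (Submodule.smul_mem _ _ (Submodule.subset_span (Set.mem_insert _ _)))

-- Splitting off the linear factors of `p` one at a time, the vector leaves `U \ W` at some factor.
theorem exists_sub_smul_mem_of_splits {W U : Submodule K V}
    (hU : U ∈ g.invtSubmodule) {p : K[X]} (hp : p.Splits) (hp0 : p ≠ 0) {x : V} (hxU : x ∈ U)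
    (hxW : x ∉ W) (hpx : aeval g p x ∈ W) : ∃ v ∈ U, v ∉ W ∧ ∃ μ : K, g v - μ • v ∈ W := by
  induction hp using Submonoid.closure_induction generalizing x with
  | mem q hq =>
    rcases hq with ⟨a, rfl⟩ | ⟨a, rfl⟩
    · have ha : a ≠ 0 := fun h => hp0 (by simp [h])
      exact absurd ((W.smul_mem_iff ha).1 (by simpa using hpx)) hxW
    · exact ⟨x, hxU, hxW, -a, by simpa using hpx⟩
  | one => exact absurd (by simpa using hpx) hxW
  | mul p q _ _ ihp ihq =>
    by_cases hq : aeval g q x ∈ W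
    · exact ihq (right_ne_zero_of_mul hp0) hxU hxW hq
    · refine ihp (left_ne_zero_of_mul hp0) (aeval_apply_smul_mem_of_le_comap hxU q g hU) hq ?_
      simpa using hpx

theorem orthogonal_mem_invtSubmodule [FiniteDimensional K V] (hB : B.Nondegenerate)
    (hg : B.IsOrthogonal g) {W : Submodule K V} (hW : W ∈ g.invtSubmodule) :
    B.orthogonal W ∈ g.invtSubmodule := by
  have hmap : W.map g = W := Submodule.eq_of_le_of_finrank_eq
    ((End.mem_invtSubmodule_iff_map_le g).1 hW)
    (W.equivMapOfInjective g (injective_of_isOrthogonal hB hg)).finrank_eq.symm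
  intro x hx w hw
  obtain ⟨w', hw', rfl⟩ := hmap.symm ▸ hw
  exact (hg w' x).trans (hx w' hw')

theorem lt_orthogonal_of_le [FiniteDimensional K V] (hB : B.Nondegenerate) {W : Submodule K V}
    (hW : W ≤ B.orthogonal W) (hdim : 2 * finrank K W < finrank K V) : W < B.orthogonal W := by
  refine hW.lt_of_ne fun h => ?_
  have := LinearMap.BilinForm.finrank_orthogonal hB W
  rw [← h] at this
  omega

theorem exists_isIsotropicFlag_fin [FiniteDimensional K V] (hB : B.Nondegenerate) (hAlt : B.IsAlt)
    (hg : B.IsOrthogonal g) (hsplit : g.charpoly.Splits) {k : ℕ} (hk : 2 * k ≤ finrank K V) :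
    ∃ v : Fin k → V, IsIsotropicFlag B g v := by
  induction k with
  | zero => exact ⟨Fin.elim0, linearIndependent_empty_type, fun i => i.elim0, fun i => i.elim0⟩
  | succ k ih =>
    obtain ⟨v, hv⟩ := ih (by omega)
    set W := Submodule.span K (Set.range v)
    have hW : W ∈ g.invtSubmodule := hv.span_range_mem_invtSubmodule
    have hle : W ≤ B.orthogonal W := Submodule.span_le.2 <| Set.range_subset_iff.2 fun j =>
      mem_orthogonal_span_range_iff.2 fun i => hv.isotropic i j
    have hdim : finrank K W = k := by simpa using finrank_span_eq_card hv.linearIndependent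
    obtain ⟨y, hyU, hyW⟩ := SetLike.exists_of_lt (lt_orthogonal_of_le hB hle (by omega))
    obtain ⟨x, hxU, hxW, μ, hx⟩ := exists_sub_smul_mem_of_splits
      (orthogonal_mem_invtSubmodule hB hg hW) hsplit g.charpoly_monic.ne_zero hyU hyW
      (by simp [g.aeval_self_charpoly])
    exact ⟨Fin.snoc v x, hv.snoc hAlt hxW (mem_orthogonal_span_range_iff.1 hxU) hx⟩

theorem exists_isIsotropicFlag [FiniteDimensional K V] (hB : B.Nondegenerate) (hAlt : B.IsAlt)
    (hg : B.IsOrthogonal g) (hsplit : g.charpoly.Splits) (ι : Type*) [Fintype ι] [LinearOrder ι]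
    (hι : 2 * Fintype.card ι ≤ finrank K V) : ∃ v : ι → V, IsIsotropicFlag B g v := by
  obtain ⟨v, hv⟩ := exists_isIsotropicFlag_fin hB hAlt hg hsplit hι
  exact ⟨_, hv.comp_orderIso (Fintype.orderIsoFinOfCardEq ι rfl).symm⟩

end FlagsOverField

section SymplecticForm

variable {l R : Type*} [Fintype l] [DecidableEq l] [CommRing R]

theorem dotProduct_J_mulVec_self (x : l ⊕ l → R) : x ⬝ᵥ J l R *ᵥ x = 0 := by
  rw [J, fromBlocks_mulVec, dotProduct_block]
  simp [dotProduct_comm, neg_mulVec]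

theorem transpose_mul_J_mul {m n : Type*} (X : Matrix (l ⊕ l) m R) (Y : Matrix (l ⊕ l) n R) :
    (Xᵀ * J l R * Y)ᵀ = -(Yᵀ * J l R * X) := by
  simp [Matrix.mul_assoc]

theorem isAlt_toBilin'_J : (toBilin' (J l R)).IsAlt := fun x => by
  rw [toBilin'_apply', dotProduct_J_mulVec_self]

theorem nondegenerate_toBilin'_J [IsDomain R] : (toBilin' (J l R)).Nondegenerate :=
  (nondegenerate_of_det_ne_zero (isUnit_det_J l R).ne_zero).toBilin'

theorem isOrthogonal_toBilin'_J_mulVecLin {M : Matrix (l ⊕ l) (l ⊕ l) R}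
    (hM : M ∈ symplecticGroup l R) : (toBilin' (J l R)).IsOrthogonal M.mulVecLin := fun x y => by
  rw [toBilin'_apply', toBilin'_apply', mulVecLin_apply, mulVecLin_apply, ← vecMul_transpose,
    ← dotProduct_mulVec, mulVec_mulVec, mulVec_mulVec, SymplecticGroup.mem_iff'.1 hM]

theorem fromCols_mem_symplecticGroup_iff {Q Z : Matrix (l ⊕ l) l R} :
    fromCols Q Z ∈ symplecticGroup l R ↔
      Qᵀ * J l R * Q = 0 ∧ Qᵀ * J l R * Z = -1 ∧ Zᵀ * J l R * Z = 0 := by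
  have hZQ : Zᵀ * J l R * Q = 1 ↔ Qᵀ * J l R * Z = -1 := by
    rw [← transpose_inj, transpose_mul_J_mul, transpose_one, neg_eq_iff_eq_neg]
  rw [SymplecticGroup.mem_iff', transpose_fromCols, fromRows_mul, fromRows_mul_fromCols]
  nth_rw 5 [J]
  rw [fromBlocks_inj, hZQ]
  tauto

theorem transpose_mul_eq_one_of_fromBlocks_mem_symplecticGroup
    {A B D : Matrix l l R} (h : fromBlocks A B 0 D ∈ symplecticGroup l R) : Aᵀ * D = 1 := by
  simpa using (SymplecticGroup.fromBlocks_mem_iff.1 h).2.2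

end SymplecticForm

-- Halving `S` would need `2` to be invertible; its strictly upper triangular part works.
theorem exists_sub_transpose_eq {l R : Type*} [AddGroup R] {S : Matrix l l R}
    (hS : Sᵀ = -S) (hdiag : ∀ i, S i i = 0) : ∃ C : Matrix l l R, C - Cᵀ = S := by
  classical
  let : LinearOrder l := linearOrderOfSTO WellOrderingRel
  refine ⟨of fun i j => if i < j then S i j else 0, ?_⟩
  ext i j
  have hji : S j i = -S i j := congrFun₂ hS i j
  rcases lt_trichotomy i j with h | rfl | h
  · simp [h, h.not_gt]
  · simp [hdiag]
  · simp [h, h.not_gt, hji]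

theorem exists_mul_eq_one_of_linearIndependent_col {m n K : Type*} [Fintype m] [Finite n]
    [DecidableEq n] [Field K] {Q : Matrix m n K} (hQ : LinearIndependent K Q.col) :
    ∃ R : Matrix n m K, R * Q = 1 := by
  classical
  have := Fintype.ofFinite n
  obtain ⟨f, hf⟩ := Q.mulVecLin.exists_leftInverse_of_injective
    (LinearMap.ker_eq_bot.2 (mulVec_injective_iff.2 hQ))
  refine ⟨LinearMap.toMatrix' f, ?_⟩
  rw [← LinearMap.toMatrix'_id, ← hf, LinearMap.toMatrix'_comp, ← toLin'_apply',
    LinearMap.toMatrix'_toLin']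

theorem exists_fromCols_mem_symplecticGroup {l K : Type*} [Fintype l] [DecidableEq l] [Field K]
    {Q : Matrix (l ⊕ l) l K} (hQ : LinearIndependent K Q.col) (hiso : Qᵀ * J l K * Q = 0) :
    ∃ Z : Matrix (l ⊕ l) l K, fromCols Q Z ∈ symplecticGroup l K := by
  obtain ⟨R, hR⟩ := exists_mul_eq_one_of_linearIndependent_col hQ
  obtain ⟨Z, hQZ⟩ : ∃ Z : Matrix (l ⊕ l) l K, Qᵀ * J l K * Z = -1 := by
    use J l K * Rᵀ
    rw [Matrix.mul_assoc, ← Matrix.mul_assoc (J l K), J_squared, Matrix.neg_mul, Matrix.one_mul,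
      Matrix.mul_neg, ← transpose_mul, hR, transpose_one]
  have hZQ : Zᵀ * J l K * Q = 1 := by
    rw [← transpose_inj, transpose_mul_J_mul, hQZ, neg_neg, transpose_one]
  obtain ⟨C, hC⟩ := exists_sub_transpose_eq (transpose_mul_J_mul Z Z) fun i => by
    rw [Matrix.mul_assoc, mul_apply_eq_vecMul]
    exact dotProduct_J_mulVec_self fun k => Z k i
  refine ⟨Z - Q * C, fromCols_mem_symplecticGroup_iff.2 ⟨hiso, ?_, ?_⟩⟩
  · rw [Matrix.mul_sub, hQZ, ← Matrix.mul_assoc, hiso, Matrix.zero_mul, sub_zero]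
  · calc (Z - Q * C)ᵀ * J l K * (Z - Q * C)
        = Zᵀ * J l K * Z - Zᵀ * J l K * Q * C - Cᵀ * (Qᵀ * J l K * Z)
            + Cᵀ * (Qᵀ * J l K * Q) * C := by
          simp only [transpose_sub, transpose_mul, Matrix.sub_mul, Matrix.mul_sub, Matrix.mul_assoc]
          abel
      _ = (C - Cᵀ) - 1 * C - Cᵀ * (-1) + Cᵀ * 0 * C := by rw [hQZ, hZQ, hiso, hC]
      _ = 0 := by noncomm_ring

section Borel

theorem inv_mul_mul_apply_eq_zero {m R : Type*} [Fintype m] [DecidableEq m] [CommRing R]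
    {M P : Matrix m m R} (hP : IsUnit P.det) {s : Set m} {i j : m} (hi : i ∉ s)
    (hj : M *ᵥ P.col j ∈ Submodule.span R (P.col '' s)) : (P⁻¹ * M * P) i j = 0 := by
  have hle : Submodule.span R (P.col '' s) ≤
      LinearMap.ker (LinearMap.proj i ∘ₗ P⁻¹.mulVecLin) := by
    rw [Submodule.span_le]
    rintro _ ⟨k, hk, rfl⟩
    have hik : i ≠ k := fun h => hi (h ▸ hk)
    have : P⁻¹ *ᵥ P.col k = Pi.single k 1 := by
      rw [← mulVec_single_one, mulVec_mulVec, nonsing_inv_mul _ hP, one_mulVec]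
    simp [this, hik]
  have h : (P⁻¹ *ᵥ (M *ᵥ P.col j)) i = 0 := hle hj
  rwa [← mulVec_single_one, mulVec_mulVec, mulVec_mulVec, mulVec_single_one] at h

variable {l K : Type*} [Fintype l] [Field K]

theorem exists_conj_eq_fromBlocks_of_splits [LinearOrder l] (M : symplecticGroup l K)
    (hsplit : (M : Matrix (l ⊕ l) (l ⊕ l) K).charpoly.Splits) :
    ∃ (P : symplecticGroup l K) (A B D : Matrix l l K), A.IsUpperTriangular ∧
      ((P⁻¹ * M * P : symplecticGroup l K) : Matrix (l ⊕ l) (l ⊕ l) K) = fromBlocks A B 0 D := by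
  obtain ⟨v, hv⟩ := exists_isIsotropicFlag nondegenerate_toBilin'_J isAlt_toBilin'_J
    (isOrthogonal_toBilin'_J_mulVecLin M.2) (by rwa [charpoly_mulVecLin]) l (by simp [two_mul])
  have hiso : (of v)ᵀᵀ * J l K * (of v)ᵀ = 0 := by
    ext i j
    refine Eq.trans ?_ (hv.isotropic i j)
    rw [toBilin'_apply', Matrix.mul_assoc]
    rfl
  obtain ⟨Z, hZ⟩ := exists_fromCols_mem_symplecticGroup (Q := (of v)ᵀ) hv.linearIndependent hiso
  set P : symplecticGroup l K := ⟨fromCols (of v)ᵀ Z, hZ⟩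
  set N := ((P⁻¹ * M * P : symplecticGroup l K) : Matrix (l ⊕ l) (l ⊕ l) K) with hN
  have hzero {r : l ⊕ l} {j : l} (hr : r ∉ Sum.inl '' Set.Iic j) : N r (Sum.inl j) = 0 := by
    rw [hN, Submonoid.coe_mul, Submonoid.coe_mul, SymplecticGroup.coe_inv']
    refine inv_mul_mul_apply_eq_zero (SymplecticGroup.symplectic_det hZ) hr ?_
    rw [← Set.image_comp]
    exact hv.apply_mem_span j
  refine ⟨P, N.toBlocks₁₁, N.toBlocks₁₂, N.toBlocks₂₂,
    fun i j hij => hzero (by simpa using hij), ?_⟩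
  have h₂₁ : N.toBlocks₂₁ = 0 := by
    ext i j
    exact hzero (by simp)
  rw [← h₂₁, fromBlocks_toBlocks]

theorem diagonal_sumElim_inv_mem_symplecticGroup [DecidableEq l] {t : l → K} (ht : ∀ i, t i ≠ 0) :
    diagonal (Sum.elim t t⁻¹) ∈ symplecticGroup l K := by
  rw [← fromBlocks_diagonal, SymplecticGroup.fromBlocks_mem_iff]
  simp [ht]

theorem isDiagonalizableSq_fromBlocks_of_injective [LinearOrder l] {A B D : Matrix l l K}
    (hA : A.IsUpperTriangular) (hM : fromBlocks A B 0 D ∈ symplecticGroup l K)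
    (hinj : Function.Injective (Sum.elim A.diag A.diag⁻¹)) :
    (fromBlocks A B 0 D).IsDiagonalizableSq := by
  have hAD : Aᵀ * D = 1 := transpose_mul_eq_one_of_fromBlocks_mem_symplecticGroup hM
  have hDA : Dᵀ * A = 1 := by simpa using congrArg transpose hAD
  let u : (Matrix l l K)ˣ := ⟨A, Dᵀ, mul_eq_one_comm.1 hDA, hDA⟩
  have hspecA (i : l) : A i i ∈ spectrum K A := by
    rw [mem_spectrum_iff_isRoot_charpoly, charpoly_of_isUpperTriangular A hA, IsRoot.def, eval_prod]
    exact Finset.prod_eq_zero (Finset.mem_univ i) (by simp)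
  have hspecD (i : l) : (A i i)⁻¹ ∈ spectrum K Dᵀ := spectrum.inv₀_mem_inv_iff (a := u).2 (hspecA i)
  refine isDiagonalizableSq_of_injective_of_mem_spectrum hinj ?_
  simp only [mem_spectrum_iff_isRoot_charpoly, charpoly_fromBlocks_zero₂₁, root_mul,
    charpoly_transpose] at hspecA hspecD ⊢
  rintro (i | i)
  · exact .inl (hspecA i)
  · exact .inr (hspecD i)

theorem exists_isDiagonalizableSq_mul_of_fromBlocks [Infinite K] [LinearOrder l]
    (M : symplecticGroup l K) {A B D : Matrix l l K} (hA : A.IsUpperTriangular)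
    (hM : (M : Matrix (l ⊕ l) (l ⊕ l) K) = fromBlocks A B 0 D) :
    ∃ S₁ S₂ : symplecticGroup l K, (S₁ : Matrix (l ⊕ l) (l ⊕ l) K).IsDiagonalizableSq ∧
      (S₂ : Matrix (l ⊕ l) (l ⊕ l) K).IsDiagonalizableSq ∧ M = S₁ * S₂ := by
  have hAD : Aᵀ * D = 1 := transpose_mul_eq_one_of_fromBlocks_mem_symplecticGroup (hM ▸ M.2)
  have hA0 (i : l) : A i i ≠ 0 := by
    have hdet : A.det ≠ 0 := by
      simpa using (isUnit_det_of_right_inverse hAD).ne_zero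
    rw [det_of_isUpperTriangular hA] at hdet
    exact Finset.prod_ne_zero_iff.1 hdet i (Finset.mem_univ i)
  obtain ⟨e, he⟩ := exists_injective_sumElim_inv l K
  have he0 (i : l) : e i ≠ 0 := fun h =>
    Sum.inl_ne_inr (he (show Sum.elim e e⁻¹ (.inl i) = Sum.elim e e⁻¹ (.inr i) by simp [h]))
  let t (i : l) : K := e i / A i i
  let T : symplecticGroup l K :=
    ⟨_, diagonal_sumElim_inv_mem_symplecticGroup fun i => div_ne_zero (he0 i) (hA0 i)⟩
  have hdiag : (A * diagonal t).diag = e := by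
    ext i
    simp [t, mul_div_cancel₀, hA0 i]
  have hMT : ((M * T : symplecticGroup l K) : Matrix (l ⊕ l) (l ⊕ l) K) =
      fromBlocks (A * diagonal t) (B * diagonal t⁻¹) 0 (D * diagonal t⁻¹) := by
    change (M : Matrix (l ⊕ l) (l ⊕ l) K) * diagonal (Sum.elim t t⁻¹) = _
    simp [hM, ← fromBlocks_diagonal, fromBlocks_multiply]
  refine ⟨M * T, T⁻¹, ?_, ?_, by group⟩
  · rw [hMT]
    refine isDiagonalizableSq_fromBlocks_of_injective
      (hA.mul (blockTriangular_diagonal _)) (hMT ▸ (M * T).2) ?_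
    rwa [hdiag]
  · rw [SymplecticGroup.coe_inv', inv_diagonal]
    exact isDiagonalizableSq_diagonal _

end Borel

theorem stmt2_general {l K : Type*} [Fintype l] [DecidableEq l] [Field K] [Infinite K]
    (M : symplecticGroup l K) (hsplit : (M : Matrix (l ⊕ l) (l ⊕ l) K).charpoly.Splits) :
    ∃ S₁ S₂ : symplecticGroup l K, (S₁ : Matrix (l ⊕ l) (l ⊕ l) K).IsDiagonalizableSq ∧
      (S₂ : Matrix (l ⊕ l) (l ⊕ l) K).IsDiagonalizableSq ∧ M = S₁ * S₂ := by
  let order : LinearOrder l := by classical exact linearOrderOfSTO WellOrderingRel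
  obtain rfl : ‹DecidableEq l› = order.toDecidableEq := Subsingleton.elim _ _
  obtain ⟨P, A, B, D, hA, hPM⟩ := exists_conj_eq_fromBlocks_of_splits M hsplit
  obtain ⟨S₁, S₂, h₁, h₂, h⟩ := exists_isDiagonalizableSq_mul_of_fromBlocks _ hA hPM
  let u : (Matrix (l ⊕ l) (l ⊕ l) K)ˣ := Units.map (symplecticGroup l K).subtype (toUnits P)
  refine ⟨P * S₁ * P⁻¹, P * S₂ * P⁻¹,
    isDiagonalizableSq_conj h₁ u, isDiagonalizableSq_conj h₂ u, ?_⟩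
  calc M = P * (P⁻¹ * M * P) * P⁻¹ := by group
    _ = P * S₁ * P⁻¹ * (P * S₂ * P⁻¹) := by rw [h]; group

theorem transpose_mul_stdSymplecticJ_mul_eq_iff {n : ℕ} {K : Type*} [Field K]
    {M : Matrix (Fin n ⊕ Fin n) (Fin n ⊕ Fin n) K} :
    Mᵀ * stdSymplecticJ n K * M = stdSymplecticJ n K ↔ M ∈ symplecticGroup (Fin n) K := by
  have hJ : stdSymplecticJ n K = -J (Fin n) K := by simp [stdSymplecticJ, J, fromBlocks_neg]
  simp [SymplecticGroup.mem_iff', hJ]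

/-- Every element of the symplectic group `Sp_{2n}(K)` over an algebraically closed field of
characteristic zero is a product of two diagonalizable symplectic matrices. -/
theorem stmt2 (K : Type*) [Field K] [IsAlgClosed K] [CharZero K] (n : ℕ) (hn : 0 < n)
    (M : Matrix (Fin n ⊕ Fin n) (Fin n ⊕ Fin n) K)
    (hM : Mᵀ * stdSymplecticJ n K * M = stdSymplecticJ n K) :
    ∃ S₁ S₂ : Matrix (Fin n ⊕ Fin n) (Fin n ⊕ Fin n) K,
      S₁ᵀ * stdSymplecticJ n K * S₁ = stdSymplecticJ n K ∧
      S₂ᵀ * stdSymplecticJ n K * S₂ = stdSymplecticJ n K ∧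
      Matrix.IsDiagonalizableSq S₁ ∧ Matrix.IsDiagonalizableSq S₂ ∧
      M = S₁ * S₂ := by
  obtain ⟨S₁, S₂, h₁, h₂, h⟩ := stmt2_general
    ⟨M, transpose_mul_stdSymplecticJ_mul_eq_iff.1 hM⟩ (IsAlgClosed.splits _)
  exact ⟨S₁, S₂, transpose_mul_stdSymplecticJ_mul_eq_iff.2 S₁.2,
    transpose_mul_stdSymplecticJ_mul_eq_iff.2 S₂.2, h₁, h₂, congrArg Subtype.val h⟩
end

section
/- Let K be an algebraically closed field of characteristic zero and let n be a positive integer. Let B be the group of invertible upper-triangular n×n matrices over K (invertible matrices M with M i j = 0 whenever i > j). Then B is generated by its diagonalizable elements: the subgroup of B generated by the set of elements of B that are conjugate (in GL_n(K)) to a diagonal matrix is all of B. -/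
/-- An element of `GL n K` is diagonalizable (semisimple) if its underlying matrix is
conjugate to a diagonal matrix. -/
def GLIsDiagonalizable {n : ℕ} {K : Type*} [Field K] (M : GL (Fin n) K) : Prop :=
  ∃ P : GL (Fin n) K, ∃ d : Fin n → K,
    (M : Matrix (Fin n) (Fin n) K) =
      (P : Matrix (Fin n) (Fin n) K) * Matrix.diagonal d *
        ((P⁻¹ : GL (Fin n) K) : Matrix (Fin n) (Fin n) K)

/-- An element of `GL n K` is upper triangular if all entries below the diagonal of its
underlying matrix vanish. -/
def GLIsUpperTriangular {n : ℕ} {K : Type*} [Field K] (M : GL (Fin n) K) : Prop :=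
  ∀ i j : Fin n, j < i → (M : Matrix (Fin n) (Fin n) K) i j = 0

/-!
Left multiplication by an invertible diagonal matrix `D` moves the diagonal of an invertible
upper-triangular matrix `M` to any prescribed tuple of units. When these units are distinct,
`D * M` has distinct eigenvalues and is therefore diagonalizable, so `M = D⁻¹ * (D * M)` is a
product of two diagonalizable upper-triangular matrices.
-/

open Matrix Module.End

section CommRing

variable {ι R : Type*} [Fintype ι] [DecidableEq ι] [CommRing R]

/-- The invertible diagonal matrix with diagonal entries `t`, as an element of `GL ι R`. These are
the elements of the diagonal torus. -/
def diagonalGL (t : ι → Rˣ) : GL ι R :=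
  Units.map (diagonalRingHom ι R).toMonoidHom (MulEquiv.piUnits.symm t)

theorem coe_diagonalGL (t : ι → Rˣ) :
    (diagonalGL t : Matrix ι ι R) = diagonal fun i => (t i : R) :=
  rfl

variable [LinearOrder ι]

variable (ι R) in
/-- The standard Borel subgroup of `GL ι R`, consisting of the upper-triangular matrices. -/
def upperTriangularSubgroup : Subgroup (GL ι R) where
  carrier := {M | (M : Matrix ι ι R).IsUpperTriangular}
  one_mem' := blockTriangular_one
  mul_mem' hM hN := BlockTriangular.mul hM hN
  inv_mem' {M} hM := by
    rw [Set.mem_ofPred_eq, coe_units_inv]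
    exact blockTriangular_inv_of_blockTriangular hM

theorem diagonalGL_mem_upperTriangularSubgroup (t : ι → Rˣ) :
    diagonalGL t ∈ upperTriangularSubgroup ι R :=
  blockTriangular_diagonal fun i => (t i : R)

theorem isUnit_diag_of_isUpperTriangular {A : Matrix ι ι R} (hA : A.IsUpperTriangular)
    (hunit : IsUnit A) (i : ι) : IsUnit (A i i) := by
  have hprod : IsUnit (∏ j, A j j) := by
    rwa [← det_of_isUpperTriangular hA, ← isUnit_iff_isUnit_det]
  exact isUnit_of_dvd_unit (Finset.dvd_prod_of_mem (fun j => A j j) (Finset.mem_univ i)) hprod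

theorem exists_diagonalGL_mul_diag_eq {M : GL ι R} (hM : M ∈ upperTriangularSubgroup ι R)
    (t : ι → Rˣ) :
    ∃ s : ι → Rˣ, ∀ i, (diagonalGL s * M : Matrix ι ι R) i i = t i := by
  choose u hu using isUnit_diag_of_isUpperTriangular hM M.isUnit
  refine ⟨t * u⁻¹, fun i => ?_⟩
  rw [coe_diagonalGL, diagonal_mul, ← hu i, ← Units.val_mul]
  simp

theorem hasEigenvalue_diag_of_isUpperTriangular [IsDomain R] {A : Matrix ι ι R}
    (hA : A.IsUpperTriangular) (i : ι) : HasEigenvalue (toLin' A) (A i i) := by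
  rw [hasEigenvalue_iff_isRoot_charpoly, charpoly_toLin', charpoly_of_isUpperTriangular A hA,
    Polynomial.isRoot_prod]
  exact ⟨i, Finset.mem_univ i, Polynomial.root_X_sub_C.mpr rfl⟩

end CommRing

theorem exists_eq_mul_diagonal_mul_inv_of_hasEigenvalue {ι K : Type*} [Fintype ι] [DecidableEq ι]
    [Field K] {A : Matrix ι ι K} {d : ι → K} (hd : Function.Injective d)
    (hA : ∀ i, HasEigenvalue (toLin' A) (d i)) :
    ∃ P : GL ι K, A = P * diagonal d * (P⁻¹ : GL ι K) := by
  choose v hv using fun i => (hA i).exists_hasEigenvector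
  have hindep : LinearIndependent K v := eigenvectors_linearIndependent' _ d hd v hv
  obtain ⟨P, hP⟩ : IsUnit (of v)ᵀ := linearIndependent_cols_iff_isUnit.mp hindep
  have hAP : A * P = P * diagonal d := by
    ext i j
    rw [hP, mul_diagonal]
    exact (congrFun (hv j).apply_eq_smul i).trans (mul_comm _ _)
  exact ⟨P, by rw [← hAP, Units.mul_inv_cancel_right]⟩

section Fin

variable {n : ℕ} {K : Type*} [Field K]

theorem glIsDiagonalizable_diagonalGL (t : Fin n → Kˣ) : GLIsDiagonalizable (diagonalGL t) :=
  ⟨1, fun i => t i, by simp [coe_diagonalGL]⟩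

theorem GLIsUpperTriangular.glIsDiagonalizable_of_injective_diag {M : GL (Fin n) K}
    (hM : GLIsUpperTriangular M)
    (hdiag : Function.Injective fun i => (M : Matrix (Fin n) (Fin n) K) i i) :
    GLIsDiagonalizable M :=
  have ⟨P, hP⟩ := exists_eq_mul_diagonal_mul_inv_of_hasEigenvalue hdiag
    (hasEigenvalue_diag_of_isUpperTriangular hM)
  ⟨P, _, hP⟩

theorem GLIsUpperTriangular.exists_glIsDiagonalizable_diagonalGL_mul {M : GL (Fin n) K}
    (hM : GLIsUpperTriangular M) (t : Fin n ↪ Kˣ) :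
    ∃ s : Fin n → Kˣ, GLIsDiagonalizable (diagonalGL s * M) := by
  obtain ⟨s, hs⟩ := exists_diagonalGL_mul_diag_eq hM t
  have hsM : GLIsUpperTriangular (diagonalGL s * M) :=
    mul_mem (diagonalGL_mem_upperTriangularSubgroup s) hM
  refine ⟨s, hsM.glIsDiagonalizable_of_injective_diag ?_⟩
  simp only [Units.val_mul, hs]
  exact Units.val_injective.comp t.injective

theorem stmt7_general (t : Fin n ↪ Kˣ) (M : GL (Fin n) K) :
    M ∈ Subgroup.closure {S : GL (Fin n) K | GLIsUpperTriangular S ∧ GLIsDiagonalizable S} ↔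
      GLIsUpperTriangular M := by
  let B := upperTriangularSubgroup (Fin n) K
  refine ⟨fun h => (Subgroup.closure_le B).mpr (fun _ hS => hS.1) h, fun hM => ?_⟩
  obtain ⟨s, hs⟩ := hM.exists_glIsDiagonalizable_diagonalGL_mul t
  have hD : diagonalGL s ∈ B := diagonalGL_mem_upperTriangularSubgroup s
  have hDM : diagonalGL s * M ∈ B := mul_mem hD hM
  refine (Subgroup.mul_mem_cancel_left _ (Subgroup.subset_closure ?_)).mp
    (Subgroup.subset_closure ⟨hDM, hs⟩)
  exact ⟨hD, glIsDiagonalizable_diagonalGL s⟩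

end Fin

/-- The Borel subgroup `B` of invertible upper-triangular matrices over an algebraically
closed field of characteristic zero is generated by its diagonalizable elements: an element
of `GL n K` lies in the subgroup generated by the diagonalizable upper-triangular matrices
if and only if it is upper triangular. -/
theorem stmt7 (K : Type*) [Field K] [IsAlgClosed K] [CharZero K] (n : ℕ) (hn : 0 < n)
    (M : GL (Fin n) K) :
    M ∈ Subgroup.closure {S : GL (Fin n) K | GLIsUpperTriangular S ∧ GLIsDiagonalizable S} ↔
      GLIsUpperTriangular M :=
  stmt7_general ⟨fun i => Units.mk0 ((i.val : K) + 1) (Nat.cast_add_one_ne_zero i.val),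
    fun i j hij => by simpa [Fin.val_inj] using hij⟩ M
end

section
/- Let K be a field of characteristic zero, let g be a finite-dimensional Lie algebra over K, let r be a Lie subalgebra of g and let i be a Lie ideal of g containing r. Suppose V is an r-submodule of g under the adjoint action (a subspace with ⁅x, v⁆ ∈ V for all x ∈ r, v ∈ V) such that V is irreducible as an r-module and the action of r on V is nontrivial (⁅x, v⁆ ≠ 0 for some x ∈ r, v ∈ V). Then V ⊆ i. -/
section LieModule

variable {R L M : Type*} [CommRing R] [LieRing L] [AddCommGroup M] [Module R M]
  [LieRingModule L M]

theorem isAtom_lieSubmodule_iff {N : LieSubmodule R L M} :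
    IsAtom N ↔ N ≠ ⊥ ∧ ∀ W : Submodule R M, W ≤ N.toSubmodule →
      (∀ x : L, ∀ w ∈ W, ⁅x, w⁆ ∈ W) → W = ⊥ ∨ W = N.toSubmodule := by
  refine ⟨fun hN ↦ ⟨hN.1, fun W hWN hW ↦ ?_⟩, fun ⟨hne, hirr⟩ ↦ ⟨hne, fun W hWN ↦ ?_⟩⟩
  · let W' : LieSubmodule R L M := { W with lie_mem := hW _ _ }
    exact (hN.le_iff.mp (show W' ≤ N from hWN)).imp
      (congrArg LieSubmodule.toSubmodule) (congrArg LieSubmodule.toSubmodule)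
  · have hW := hirr W hWN.le fun x w hw ↦ W.lie_mem hw
    rw [LieSubmodule.toSubmodule_eq_bot, LieSubmodule.toSubmodule_inj] at hW
    exact hW.resolve_right hWN.ne

variable [LieAlgebra R L] {H : LieSubalgebra R L} {I : LieIdeal R L} {J : LieIdeal R H}

theorem lie_le_restr_lie_top (hJI : J ≤ I.comap H.incl) (N : LieSubmodule R H M) :
    ⁅J, N⁆ ≤ ⁅I, (⊤ : LieSubmodule R L M)⁆.restr H :=
  (LieSubmodule.lie_le_iff _ _ _).mpr fun _ hx m _ ↦
    LieSubmodule.lie_mem_lie (hJI hx) (LieSubmodule.mem_top m)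

theorem le_restr_lie_top_of_isAtom {N : LieSubmodule R H M} (hJI : J ≤ I.comap H.incl)
    (hN : IsAtom N) (hJN : ⁅J, N⁆ ≠ ⊥) : N ≤ ⁅I, (⊤ : LieSubmodule R L M)⁆.restr H :=
  calc
    N = ⁅J, N⁆ := (lie_eq_self_of_isAtom_of_ne_bot hN hJN).symm
    _ ≤ ⁅I, (⊤ : LieSubmodule R L M)⁆.restr H := lie_le_restr_lie_top hJI N

end LieModule

theorem stmt12_general {R L : Type*} [CommRing R] [LieRing L] [LieAlgebra R L]
    (H : LieSubalgebra R L) (I : LieIdeal R L) (hHI : ∀ x ∈ H, x ∈ I) (V : Submodule R L)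
    (hmod : ∀ x ∈ H, ∀ v ∈ V, ⁅x, v⁆ ∈ V)
    (hirr : ∀ W : Submodule R L, W ≤ V → (∀ x ∈ H, ∀ w ∈ W, ⁅x, w⁆ ∈ W) → W = ⊥ ∨ W = V)
    (hnontriv : ∃ x ∈ H, ∃ v ∈ V, ⁅x, v⁆ ≠ 0) :
    ∀ v ∈ V, v ∈ I := by
  obtain ⟨x, hx, v, hv, hxv⟩ := hnontriv
  let N : LieSubmodule R H L := { V with lie_mem := fun {y w} hw ↦ hmod y y.2 w hw }
  have hHN : ⁅(⊤ : LieIdeal R H), N⁆ ≠ ⊥ := fun h ↦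
    hxv ((LieSubmodule.lie_eq_bot_iff _ _).mp h ⟨x, hx⟩ (LieSubmodule.mem_top _) v hv)
  have hN_ne_bot : N ≠ ⊥ := fun h ↦ hHN (by rw [h, LieSubmodule.lie_bot])
  have hN : IsAtom N := isAtom_lieSubmodule_iff.mpr
    ⟨hN_ne_bot, fun W hWN hW ↦ hirr W hWN fun y hy ↦ hW ⟨y, hy⟩⟩
  have hN_le : N ≤ ⁅I, (⊤ : LieIdeal R L)⁆.restr H :=
    le_restr_lie_top_of_isAtom (fun y _ ↦ hHI y y.2) hN hHN
  exact fun w hw ↦ LieSubmodule.lie_le_left I ⊤ (hN_le hw)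

/-- Any Lie ideal containing `r` contains every irreducible `r`-submodule (under the adjoint
action) on which `r` acts nontrivially. -/
theorem stmt12 (K : Type*) [Field K] [CharZero K]
    (g : Type*) [LieRing g] [LieAlgebra K g] [Module.Finite K g]
    (r : LieSubalgebra K g) (i : LieIdeal K g)
    (hri : ∀ x ∈ r, x ∈ i)
    (V : Submodule K g)
    (hmod : ∀ x ∈ r, ∀ v ∈ V, ⁅x, v⁆ ∈ V)
    (hne : V ≠ ⊥)
    (hirr : ∀ W : Submodule K g, W ≤ V → (∀ x ∈ r, ∀ w ∈ W, ⁅x, w⁆ ∈ W) → W = ⊥ ∨ W = V)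
    (hnontriv : ∃ x ∈ r, ∃ v ∈ V, ⁅x, v⁆ ≠ 0) :
    ∀ v ∈ V, v ∈ i :=
  stmt12_general r i hri V hmod hirr hnontriv
end

section
/- Let K be an algebraically closed field of characteristic zero and let g be a finite-dimensional Lie algebra over K. Let r be a Lie subalgebra of g and n a Lie ideal of g such that g = r ⊕ n as vector spaces and such that n, regarded as an r-module via the adjoint action, is a sum of irreducible r-submodules. Let n₁ denote the sum of all irreducible r-submodules of n on which r acts nontrivially, and let s be the Lie subalgebra of n generated by n₁. Then the subspace r ⊕ s is a Lie ideal of g. -/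
section Defs

variable (K : Type*) [Field K] (g : Type*) [LieRing g] [LieAlgebra K g]
  (r : LieSubalgebra K g)

/-- A subspace of `g` stable under the adjoint action of the subalgebra `r`. -/
def IsAdSubmodule (V : Submodule K g) : Prop :=
  ∀ x ∈ r, ∀ v ∈ V, ⁅x, v⁆ ∈ V

/-- An irreducible `r`-submodule of `g` under the adjoint action. -/
def IsIrreducibleAdSubmodule (V : Submodule K g) : Prop :=
  IsAdSubmodule K g r V ∧ V ≠ ⊥ ∧
    ∀ W : Submodule K g, W ≤ V → IsAdSubmodule K g r W → W = ⊥ ∨ W = V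

/-- The adjoint action of `r` on `V` is nontrivial. -/
def HasNontrivialAdAction (V : Submodule K g) : Prop :=
  ∃ x ∈ r, ∃ v ∈ V, ⁅x, v⁆ ≠ 0

/-- `n₁`: the sum of all irreducible `r`-submodules of `n` with nontrivial `r`-action. -/
def adNontrivPart (n : Submodule K g) : Submodule K g :=
  sSup {V : Submodule K g | V ≤ n ∧ IsIrreducibleAdSubmodule K g r V ∧
    HasNontrivialAdAction K g r V}

/-- `s`: the Lie subalgebra generated by `n₁`. -/
def adNontrivSubalgebra (n : Submodule K g) : LieSubalgebra K g :=
  LieSubalgebra.lieSpan K g (adNontrivPart K g r n : Set g)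

end Defs

/-!
Everything rests on the identity `n₁ = ⁅r, n⁆`: an irreducible `r`-module `V` is either trivial or
equal to `⁅r, V⁆`. Complete reducibility then gives `n = n₁ + n₀`, where `n₀` is the centralizer of
`r` in `n`. The space `⁅r, n⁆` is stable under `r`, and also under `n₀`, because an element `z` of
`n₀` satisfies `⁅z, ⁅x, v⁆⁆ = ⁅x, ⁅z, v⁆⁆` for `x ∈ r`. Hence `r` and `n₀` normalize the subalgebra
`s` generated by `n₁`, and so does `n₁ ⊆ s`: already `s` is an ideal of `g`. Finally
`⁅n, r⁆ ⊆ n₁ ⊆ s` and `⁅r, r⁆ ⊆ r` make `r + s` an ideal.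
-/

section LieModule

open LieModule

variable {R L M : Type*} [CommRing R] [LieRing L] [LieAlgebra R L]
  [AddCommGroup M] [Module R M] [LieRingModule L M] [LieModule R L M]

theorem top_lie_eq_self_of_isAtom {V : LieSubmodule R L M} (hV : IsAtom V)
    (hnt : ¬V ≤ maxTrivSubmodule R L M) : ⁅(⊤ : LieIdeal R L), V⁆ = V :=
  lie_eq_self_of_isAtom_of_ne_bot hV (mt (le_max_triv_iff_bracket_eq_bot R L M).2 hnt)

theorem le_sSup_nontrivial_atoms_sup_maxTrivSubmodule {N : LieSubmodule R L M}
    (hN : N ≤ sSup {V | V ≤ N ∧ IsAtom V}) :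
    N ≤ sSup {V | V ≤ N ∧ IsAtom V ∧ ¬V ≤ maxTrivSubmodule R L M} ⊔ maxTrivSubmodule R L M := by
  refine hN.trans (sSup_le fun V hV => ?_)
  by_cases htriv : V ≤ maxTrivSubmodule R L M
  · exact le_sup_of_le_right htriv
  · exact le_sup_of_le_left (le_sSup ⟨hV.1, hV.2, htriv⟩)

theorem top_lie_eq_sSup_nontrivial_atoms {N : LieSubmodule R L M}
    (hN : N ≤ sSup {V | V ≤ N ∧ IsAtom V}) :
    ⁅(⊤ : LieIdeal R L), N⁆ =
      sSup {V | V ≤ N ∧ IsAtom V ∧ ¬V ≤ maxTrivSubmodule R L M} := by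
  refine le_antisymm ?_ (sSup_le fun V ⟨hVN, hV, hnt⟩ => ?_)
  · refine (LieSubmodule.mono_lie_right ⊤
      (le_sSup_nontrivial_atoms_sup_maxTrivSubmodule hN)).trans ?_
    rw [LieSubmodule.lie_sup, ideal_oper_maxTrivSubmodule_eq_bot, sup_bot_eq]
    exact LieSubmodule.lie_le_right _ _
  · calc V = ⁅(⊤ : LieIdeal R L), V⁆ := (top_lie_eq_self_of_isAtom hV hnt).symm
      _ ≤ ⁅(⊤ : LieIdeal R L), N⁆ := LieSubmodule.mono_lie_right ⊤ hVN

theorem le_top_lie_sup_maxTrivSubmodule {N : LieSubmodule R L M}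
    (hN : N ≤ sSup {V | V ≤ N ∧ IsAtom V}) :
    N ≤ ⁅(⊤ : LieIdeal R L), N⁆ ⊔ maxTrivSubmodule R L M := by
  rw [top_lie_eq_sSup_nontrivial_atoms hN]
  exact le_sSup_nontrivial_atoms_sup_maxTrivSubmodule hN

theorem lie_mem_ideal_lie_of_mem_maxTrivSubmodule {r : LieSubalgebra R L} {I : LieIdeal R r}
    {N : LieSubmodule R r M} {z : L} (hz : z ∈ maxTrivSubmodule R r L)
    (hzN : ∀ v ∈ N, ⁅z, v⁆ ∈ N) {y : M} (hy : y ∈ ⁅I, N⁆) : ⁅z, y⁆ ∈ ⁅I, N⁆ := by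
  let f : M →ₗ⁅R, r⁆ M :=
    { toEnd R L M z with
      map_lie' := fun {x m} => by
        have hxz : ⁅(x : L), z⁆ = 0 := hz x
        change ⁅z, ⁅(x : L), m⁆⁆ = ⁅(x : L), ⁅z, m⁆⁆
        rw [leibniz_lie (x : L) z m, hxz, zero_lie, zero_add] }
  have hfN : N.map f ≤ N := LieSubmodule.map_le_iff_le_comap.2 hzN
  have hf : ⁅I, N⁆.map f ≤ ⁅I, N⁆ := by
    rw [LieSubmodule.map_bracket_eq]
    exact LieSubmodule.mono_lie_right I hfN
  exact hf (LieSubmodule.mem_map_of_mem hy)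

end LieModule

section Normalizer

open LieModule LieSubalgebra

variable {R L : Type*} [CommRing R] [LieRing L] [LieAlgebra R L]

theorem mem_normalizer_lieSpan {S : Set L} {x : L} (hx : ∀ y ∈ S, ⁅x, y⁆ ∈ lieSpan R L S) :
    x ∈ (lieSpan R L S).normalizer := by
  rw [mem_normalizer_iff]
  intro y hy
  induction hy using lieSpan_induction with
  | mem y hy => exact hx y hy
  | zero => rw [lie_zero]; exact zero_mem _
  | add y z _ _ ihy ihz => rw [lie_add]; exact add_mem ihy ihz
  | smul a y _ ih => rw [lie_smul]; exact SMulMemClass.smul_mem a ih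
  | lie y z hy hz ihy ihz =>
    rw [leibniz_lie]
    exact add_mem (lie_mem _ ihy hz) (lie_mem _ hy ihz)

theorem normalizer_lieSpan_top_lie_eq_top {r : LieSubalgebra R L} {I : LieIdeal R L}
    (hsup : r.toSubmodule ⊔ I.toSubmodule = ⊤)
    (hI : I.restr r ≤ ⁅(⊤ : LieIdeal R r), I.restr r⁆ ⊔ maxTrivSubmodule R r L) :
    (lieSpan R L (⁅(⊤ : LieIdeal R r), I.restr r⁆ : LieSubmodule R r L)).normalizer = ⊤ := by
  set N₁ := ⁅(⊤ : LieIdeal R r), I.restr r⁆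
  set s := lieSpan R L (N₁ : Set L)
  have hr : r.toSubmodule ≤ s.normalizer.toSubmodule := fun x hx =>
    mem_normalizer_lieSpan fun y hy => subset_lieSpan (N₁.lie_mem (x := ⟨x, hx⟩) hy)
  have hN₁ : N₁.toSubmodule ≤ s.normalizer.toSubmodule := fun x hx =>
    s.le_normalizer (subset_lieSpan hx)
  have hcent : (maxTrivSubmodule R r L).toSubmodule ≤ s.normalizer.toSubmodule := fun z hz =>
    mem_normalizer_lieSpan fun y hy => subset_lieSpan <|
      lie_mem_ideal_lie_of_mem_maxTrivSubmodule hz (fun v hv => I.lie_mem hv) hy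
  have hI' : I.toSubmodule ≤ N₁.toSubmodule ⊔ (maxTrivSubmodule R r L).toSubmodule := by
    rw [← LieSubmodule.sup_toSubmodule]
    exact hI
  rw [← toSubmodule_inj, top_toSubmodule, eq_top_iff, ← hsup]
  exact sup_le hr (hI'.trans (sup_le hN₁ hcent))

theorem lie_mem_sup_of_normalizer_eq_top {r s : LieSubalgebra R L} {V : Submodule R L}
    (hsup : r.toSubmodule ⊔ V = ⊤) (hs : s.normalizer = ⊤)
    (hrV : ∀ x ∈ r, ∀ v ∈ V, ⁅x, v⁆ ∈ s) (x : L) {y : L}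
    (hy : y ∈ r.toSubmodule ⊔ s.toSubmodule) : ⁅x, y⁆ ∈ r.toSubmodule ⊔ s.toSubmodule := by
  obtain ⟨a, ha, b, hb, rfl⟩ := Submodule.mem_sup.1 hy
  obtain ⟨c, hc, v, hv, rfl⟩ := Submodule.mem_sup.1 (hsup ▸ Submodule.mem_top : x ∈ _ ⊔ V)
  have hca : ⁅c, a⁆ ∈ r := r.lie_mem hc ha
  have hva : ⁅v, a⁆ ∈ s := by
    rw [← lie_skew]
    exact neg_mem (hrV a ha v hv)
  have hb' : ⁅c + v, b⁆ ∈ s := (s.mem_normalizer_iff _).1 (hs ▸ mem_top _) b hb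
  rw [lie_add, add_lie c v a]
  exact add_mem (Submodule.add_mem_sup hca hva) (Submodule.mem_sup_right hb')

end Normalizer

section AdSubmodule

open LieModule LieSubalgebra

variable {K : Type*} [Field K] {g : Type*} [LieRing g] [LieAlgebra K g] {r : LieSubalgebra K g}

theorem isAdSubmodule_iff_exists {V : Submodule K g} :
    IsAdSubmodule K g r V ↔ ∃ W : LieSubmodule K r g, W.toSubmodule = V := by
  rw [V.exists_lieSubmodule_coe_eq_iff r]
  exact ⟨fun h x v hv => h x x.2 v hv, fun h x hx v hv => h ⟨x, hx⟩ v hv⟩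

theorem isIrreducibleAdSubmodule_iff_isAtom {V : LieSubmodule K r g} :
    IsIrreducibleAdSubmodule K g r V.toSubmodule ↔ IsAtom V := by
  constructor
  · rintro ⟨-, hbot, hmin⟩
    refine ⟨fun h => hbot (by rw [h, LieSubmodule.bot_toSubmodule]), fun W hWV => ?_⟩
    have hW := hmin W.toSubmodule hWV.le (isAdSubmodule_iff_exists.2 ⟨W, rfl⟩)
    rw [LieSubmodule.toSubmodule_eq_bot, LieSubmodule.toSubmodule_inj] at hW
    exact hW.resolve_right hWV.ne
  · intro hV
    refine ⟨isAdSubmodule_iff_exists.2 ⟨V, rfl⟩, mt (LieSubmodule.toSubmodule_eq_bot V).1 hV.1,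
      fun U hUV hU => ?_⟩
    obtain ⟨W, rfl⟩ := isAdSubmodule_iff_exists.1 hU
    rw [LieSubmodule.toSubmodule_eq_bot, LieSubmodule.toSubmodule_inj]
    exact hV.le_iff.1 hUV

theorem hasNontrivialAdAction_iff {V : LieSubmodule K r g} :
    HasNontrivialAdAction K g r V.toSubmodule ↔ ¬V ≤ maxTrivSubmodule K r g := by
  constructor
  · rintro ⟨x, hx, v, hv, hne⟩ htriv
    exact hne (htriv hv ⟨x, hx⟩)
  · intro hnt
    obtain ⟨v, hv, hvtriv⟩ := SetLike.not_le_iff_exists.1 hnt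
    rw [mem_maxTrivSubmodule, not_forall] at hvtriv
    obtain ⟨x, hne⟩ := hvtriv
    exact ⟨x, x.2, v, hv, hne⟩

theorem sSup_irreducibleAdSubmodules_eq (N : LieSubmodule K r g) (p : Submodule K g → Prop) :
    sSup {V : Submodule K g | V ≤ N.toSubmodule ∧ IsIrreducibleAdSubmodule K g r V ∧ p V} =
      (sSup {V : LieSubmodule K r g | V ≤ N ∧ IsAtom V ∧ p V.toSubmodule}).toSubmodule := by
  rw [LieSubmodule.sSup_toSubmodule]
  congr 1
  ext V
  constructor
  · rintro ⟨hVN, hV, hp⟩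
    obtain ⟨W, rfl⟩ := isAdSubmodule_iff_exists.1 hV.1
    exact ⟨W, ⟨hVN, isIrreducibleAdSubmodule_iff_isAtom.1 hV, hp⟩, rfl⟩
  · rintro ⟨W, ⟨hWN, hW, hp⟩, rfl⟩
    exact ⟨hWN, isIrreducibleAdSubmodule_iff_isAtom.2 hW, hp⟩

theorem le_sSup_atoms_of_le_sSup_irreducibleAdSubmodules {N : LieSubmodule K r g}
    (hN : N.toSubmodule ≤
      sSup {V : Submodule K g | V ≤ N.toSubmodule ∧ IsIrreducibleAdSubmodule K g r V}) :
    N ≤ sSup {V | V ≤ N ∧ IsAtom V} := by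
  have h := sSup_irreducibleAdSubmodules_eq N fun _ => True
  simp only [and_true] at h
  rw [← LieSubmodule.toSubmodule_le_toSubmodule, ← h]
  exact hN

theorem adNontrivPart_eq_top_lie {N : LieSubmodule K r g} (hN : N ≤ sSup {V | V ≤ N ∧ IsAtom V}) :
    adNontrivPart K g r N.toSubmodule =
      (⁅(⊤ : LieIdeal K r), N⁆ : LieSubmodule K r g).toSubmodule := by
  rw [adNontrivPart, sSup_irreducibleAdSubmodules_eq, top_lie_eq_sSup_nontrivial_atoms hN]
  simp only [hasNontrivialAdAction_iff]

theorem adNontrivSubalgebra_eq_lieSpan_top_lie {N : LieSubmodule K r g}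
    (hN : N ≤ sSup {V | V ≤ N ∧ IsAtom V}) :
    adNontrivSubalgebra K g r N.toSubmodule =
      lieSpan K g (⁅(⊤ : LieIdeal K r), N⁆ : LieSubmodule K r g) := by
  rw [adNontrivSubalgebra, adNontrivPart_eq_top_lie hN, LieSubmodule.coe_toSubmodule]

end AdSubmodule

theorem stmt13_general (K : Type*) [Field K] (g : Type*) [LieRing g] [LieAlgebra K g]
    (r : LieSubalgebra K g) (n : LieIdeal K g)
    (hsup : r.toSubmodule ⊔ n.toSubmodule = ⊤)
    (hsemisimple : n.toSubmodule =
      sSup {V : Submodule K g | V ≤ n.toSubmodule ∧ IsIrreducibleAdSubmodule K g r V}) :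
    ∀ x : g, ∀ y ∈ r.toSubmodule ⊔ (adNontrivSubalgebra K g r n.toSubmodule).toSubmodule,
      ⁅x, y⁆ ∈ r.toSubmodule ⊔ (adNontrivSubalgebra K g r n.toSubmodule).toSubmodule := by
  have hn : n.restr r ≤ sSup {V | V ≤ n.restr r ∧ IsAtom V} :=
    le_sSup_atoms_of_le_sSup_irreducibleAdSubmodules hsemisimple.le
  have hs_span : adNontrivSubalgebra K g r n.toSubmodule = LieSubalgebra.lieSpan K g
      (⁅(⊤ : LieIdeal K r), n.restr r⁆ : LieSubmodule K r g) := by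
    rw [← adNontrivSubalgebra_eq_lieSpan_top_lie hn, LieSubmodule.restr_toSubmodule]
  have hs : (adNontrivSubalgebra K g r n.toSubmodule).normalizer = ⊤ := by
    rw [hs_span]
    exact normalizer_lieSpan_top_lie_eq_top hsup (le_top_lie_sup_maxTrivSubmodule hn)
  have hrn : ∀ x ∈ r, ∀ v ∈ n.toSubmodule,
      ⁅x, v⁆ ∈ adNontrivSubalgebra K g r n.toSubmodule := by
    intro x hx v hv
    rw [hs_span]
    exact LieSubalgebra.subset_lieSpan
      (LieSubmodule.lie_mem_lie (LieSubmodule.mem_top (⟨x, hx⟩ : r)) hv)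
  exact fun x y hy => lie_mem_sup_of_normalizer_eq_top hsup hs hrn x hy

/-- Lemma 4: if `g = r ⊕ n` with `n` a completely reducible `r`-module under the adjoint
action, then `r ⊕ s` is a Lie ideal of `g`, where `s` is the subalgebra generated by the sum
`n₁` of all nontrivial irreducible `r`-submodules of `n`. -/
theorem stmt13 (K : Type*) [Field K] [IsAlgClosed K] [CharZero K]
    (g : Type*) [LieRing g] [LieAlgebra K g] [Module.Finite K g]
    (r : LieSubalgebra K g) (n : LieIdeal K g)
    (hsup : r.toSubmodule ⊔ n.toSubmodule = ⊤)
    (hinf : r.toSubmodule ⊓ n.toSubmodule = ⊥)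
    (hsemisimple : n.toSubmodule =
      sSup {V : Submodule K g | V ≤ n.toSubmodule ∧ IsIrreducibleAdSubmodule K g r V}) :
    ∀ x : g, ∀ y ∈ r.toSubmodule ⊔ (adNontrivSubalgebra K g r n.toSubmodule).toSubmodule,
      ⁅x, y⁆ ∈ r.toSubmodule ⊔ (adNontrivSubalgebra K g r n.toSubmodule).toSubmodule :=
  stmt13_general K g r n hsup hsemisimple
end

section
/- Let K be an algebraically closed field of characteristic zero and let g be a finite-dimensional Lie algebra over K. Let r be a Lie subalgebra of g and n a Lie ideal of g such that g = r ⊕ n as vector spaces and such that n, regarded as an r-module via the adjoint action, is a sum of irreducible r-submodules. Let n₁ denote the sum of all irreducible r-submodules of n on which r acts nontrivially, and let s be the Lie subalgebra of n generated by n₁. Then r ⊕ s is the minimal Lie ideal of g containing r: r ⊕ s is a Lie ideal of g, and every Lie ideal of g that contains r contains r ⊕ s. -/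
/-!
Write `[U, V]` for the span of the brackets and `C` for the centralizer of `r` in `g`, which is
`LieModule.maxTrivSubmodule K r g`. An irreducible `r`-submodule `V` of `g` is either contained in
`C` or satisfies `[r, V] = V`; hence `[r, n₁] = n₁` and `g = r + n₁ + C`. By the first identity,
every ideal containing `r` contains `n₁`, hence `s`. Together the two give `r + n₁ = r + [r, g]`,
and `C` normalizes both `r` and `[r, g]`. So the subalgebra generated by `r` and `n₁`, which is
`r + s` because `r` normalizes `s`, is normalized by `r`, `n₁` and `C`, that is, by all of `g`.
-/

section Normalizer

variable {R : Type*} [CommRing R] {L : Type*} [LieRing L] [LieAlgebra R L]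

theorem mem_normalizer_lieSpan_of_forall_lie_mem {S : Set L} {x : L}
    (hx : ∀ y ∈ S, ⁅x, y⁆ ∈ LieSubalgebra.lieSpan R L S) :
    x ∈ (LieSubalgebra.lieSpan R L S).normalizer := by
  rw [LieSubalgebra.mem_normalizer_iff]
  intro y hy
  induction hy using LieSubalgebra.lieSpan_induction with
  | mem y hy => exact hx y hy
  | zero => rw [lie_zero]; exact zero_mem _
  | add y z _ _ hxy hxz => rw [lie_add]; exact add_mem hxy hxz
  | smul c y _ hxy => rw [lie_smul]; exact SMulMemClass.smul_mem c hxy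
  | lie y z hy hz hxy hxz =>
    rw [leibniz_lie]
    exact add_mem (LieSubalgebra.lie_mem _ hxy hz) (LieSubalgebra.lie_mem _ hy hxz)

theorem toSubmodule_sup_of_le_normalizer {H H' : LieSubalgebra R L} (h : H ≤ H'.normalizer) :
    (H ⊔ H').toSubmodule = H.toSubmodule ⊔ H'.toSubmodule := by
  let T : LieSubalgebra R L :=
    { H.toSubmodule ⊔ H'.toSubmodule with
      lie_mem' := by
        intro x y hx hy
        obtain ⟨a, ha, a', ha', rfl⟩ := Submodule.mem_sup.1 hx
        obtain ⟨b, hb, b', hb', rfl⟩ := Submodule.mem_sup.1 hy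
        have hab' : ⁅a, b'⁆ ∈ H' := (H'.mem_normalizer_iff a).1 (h ha) b' hb'
        have ha'b : ⁅a', b⁆ ∈ H' := (H'.mem_normalizer_iff' b).1 (h hb) a' ha'
        rw [lie_add, add_lie, add_lie, add_assoc]
        exact Submodule.add_mem_sup (H.lie_mem ha hb)
          (add_mem ha'b (add_mem hab' (H'.lie_mem ha' hb'))) }
  have hle : H ⊔ H' ≤ T :=
    sup_le (show H.toSubmodule ≤ T.toSubmodule from le_sup_left)
      (show H'.toSubmodule ≤ T.toSubmodule from le_sup_right)
  exact le_antisymm hle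
    (sup_le (show H ≤ H ⊔ H' from le_sup_left) (show H' ≤ H ⊔ H' from le_sup_right))

theorem maxTrivSubmodule_le_normalizer (H : LieSubalgebra R L) :
    (LieModule.maxTrivSubmodule R H L).toSubmodule ≤ H.normalizer.toSubmodule := by
  intro x hx
  refine (H.mem_normalizer_iff' x).2 fun y hy => ?_
  have hyx : ⁅y, x⁆ = 0 := hx ⟨y, hy⟩
  rw [hyx]
  exact H.zero_mem

end Normalizer

section BracketSpan

variable {R : Type*} [CommRing R] {L : Type*} [LieRing L] [LieAlgebra R L]

/-- The subspace `[U, V]` spanned by the brackets `⁅u, v⁆` with `u ∈ U` and `v ∈ V`. Mathlib's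
`⁅I, N⁆` requires a Lie ideal and a Lie submodule; here `U` and `V` are arbitrary subspaces. -/
def bracketSpan (U V : Submodule R L) : Submodule R L :=
  Submodule.map₂ (LieAlgebra.ad R L : L →ₗ[R] Module.End R L) U V

theorem lie_mem_bracketSpan {U V : Submodule R L} {u v : L} (hu : u ∈ U) (hv : v ∈ V) :
    ⁅u, v⁆ ∈ bracketSpan U V :=
  Submodule.apply_mem_map₂ (LieAlgebra.ad R L : L →ₗ[R] Module.End R L) hu hv

theorem bracketSpan_le {U V W : Submodule R L} :
    bracketSpan U V ≤ W ↔ ∀ u ∈ U, ∀ v ∈ V, ⁅u, v⁆ ∈ W :=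
  Submodule.map₂_le

theorem bracketSpan_mono_right {U V V' : Submodule R L} (h : V ≤ V') :
    bracketSpan U V ≤ bracketSpan U V' :=
  Submodule.map₂_le_map₂_right h

theorem bracketSpan_sup_right (U V V' : Submodule R L) :
    bracketSpan U (V ⊔ V') = bracketSpan U V ⊔ bracketSpan U V' :=
  Submodule.map₂_sup_right _ U V V'

theorem lie_mem_bracketSpan_of_forall_lie_mem {U V : Submodule R L} {x y : L}
    (hU : ∀ u ∈ U, ⁅x, u⁆ ∈ U) (hV : ∀ v ∈ V, ⁅x, v⁆ ∈ V) (hy : y ∈ bracketSpan U V) :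
    ⁅x, y⁆ ∈ bracketSpan U V := by
  suffices h : bracketSpan U V ≤ (bracketSpan U V).comap (LieAlgebra.ad R L x : L →ₗ[R] L) from
    h hy
  refine bracketSpan_le.2 fun u hu v hv => ?_
  rw [Submodule.mem_comap, LieAlgebra.ad_apply, leibniz_lie]
  exact add_mem (lie_mem_bracketSpan (hU u hu) hv) (lie_mem_bracketSpan hu (hV v hv))

theorem bracketSpan_self_le (H : LieSubalgebra R L) :
    bracketSpan H.toSubmodule H.toSubmodule ≤ H.toSubmodule :=
  bracketSpan_le.2 fun _ hu _ hv => H.lie_mem hu hv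

theorem bracketSpan_maxTrivSubmodule (H : LieSubalgebra R L) :
    bracketSpan H.toSubmodule (LieModule.maxTrivSubmodule R H L).toSubmodule = ⊥ :=
  le_bot_iff.1 (bracketSpan_le.2 fun u hu _ hv => hv ⟨u, hu⟩)

end BracketSpan

section IdealGeneratedBySubalgebra

variable {R : Type*} [CommRing R] {L : Type*} [LieRing L] [LieAlgebra R L]
  {H : LieSubalgebra R L} {M : Submodule R L}

theorem le_normalizer_lieSpan_of_bracketSpan_le (hM : bracketSpan H.toSubmodule M ≤ M) :
    H ≤ (LieSubalgebra.lieSpan R L (M : Set L)).normalizer := fun _ hx =>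
  mem_normalizer_lieSpan_of_forall_lie_mem fun _ hy =>
    LieSubalgebra.subset_lieSpan (hM (lie_mem_bracketSpan hx hy))

theorem bracketSpan_top_le_sup (hM : bracketSpan H.toSubmodule M ≤ M)
    (htop : H.toSubmodule ⊔ (M ⊔ (LieModule.maxTrivSubmodule R H L).toSubmodule) = ⊤) :
    bracketSpan H.toSubmodule ⊤ ≤ H.toSubmodule ⊔ M := by
  rw [← htop, bracketSpan_sup_right, bracketSpan_sup_right, bracketSpan_maxTrivSubmodule,
    sup_bot_eq]
  exact sup_le_sup (bracketSpan_self_le H) hM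

theorem normalizer_le_normalizer_sup_lieSpan (hM : bracketSpan H.toSubmodule M = M)
    (htop : H.toSubmodule ⊔ (M ⊔ (LieModule.maxTrivSubmodule R H L).toSubmodule) = ⊤) :
    H.normalizer ≤ (H ⊔ LieSubalgebra.lieSpan R L (M : Set L)).normalizer := by
  have hspan : H ⊔ LieSubalgebra.lieSpan R L (M : Set L) =
      LieSubalgebra.lieSpan R L ((H : Set L) ∪ M) := by
    rw [LieSubalgebra.span_union, LieSubalgebra.lieSpan_eq]
  have hsup : H.toSubmodule ⊔ M ≤
      (LieSubalgebra.lieSpan R L ((H : Set L) ∪ M)).toSubmodule :=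
    sup_le (fun _ hy => LieSubalgebra.subset_lieSpan (Or.inl hy))
      fun _ hy => LieSubalgebra.subset_lieSpan (Or.inr hy)
  rw [hspan]
  intro x hx
  have hxH : ∀ y ∈ H, ⁅x, y⁆ ∈ H := (H.mem_normalizer_iff x).1 hx
  refine mem_normalizer_lieSpan_of_forall_lie_mem ?_
  rintro y (hy | hy)
  · exact hsup (Submodule.mem_sup_left (hxH y hy))
  · have hy' : y ∈ bracketSpan H.toSubmodule ⊤ :=
      bracketSpan_mono_right le_top (hM.ge hy)
    exact hsup (bracketSpan_top_le_sup hM.le htop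
      (lie_mem_bracketSpan_of_forall_lie_mem hxH (fun _ _ => Submodule.mem_top) hy'))

theorem normalizer_sup_lieSpan_eq_top (hM : bracketSpan H.toSubmodule M = M)
    (htop : H.toSubmodule ⊔ (M ⊔ (LieModule.maxTrivSubmodule R H L).toSubmodule) = ⊤) :
    (H ⊔ LieSubalgebra.lieSpan R L (M : Set L)).normalizer = ⊤ := by
  set T := H ⊔ LieSubalgebra.lieSpan R L (M : Set L)
  have hHT : H ≤ T.normalizer := le_sup_left.trans T.le_normalizer
  have hMT : M ≤ T.normalizer.toSubmodule := fun _ hy =>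
    T.le_normalizer ((le_sup_right : _ ≤ T) (LieSubalgebra.subset_lieSpan hy))
  have hCT : (LieModule.maxTrivSubmodule R H L).toSubmodule ≤ T.normalizer.toSubmodule :=
    (maxTrivSubmodule_le_normalizer H).trans (normalizer_le_normalizer_sup_lieSpan hM htop)
  rw [← LieSubalgebra.toSubmodule_inj, LieSubalgebra.top_toSubmodule]
  exact top_le_iff.1 (htop.ge.trans (sup_le hHT (sup_le hMT hCT)))

theorem lie_mem_sup_lieSpan (hM : bracketSpan H.toSubmodule M = M)
    (htop : H.toSubmodule ⊔ (M ⊔ (LieModule.maxTrivSubmodule R H L).toSubmodule) = ⊤)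
    (x : L) {y : L}
    (hy : y ∈ H.toSubmodule ⊔ (LieSubalgebra.lieSpan R L (M : Set L)).toSubmodule) :
    ⁅x, y⁆ ∈ H.toSubmodule ⊔ (LieSubalgebra.lieSpan R L (M : Set L)).toSubmodule := by
  rw [← toSubmodule_sup_of_le_normalizer (le_normalizer_lieSpan_of_bracketSpan_le hM.le)] at hy ⊢
  have hx : x ∈ (H ⊔ LieSubalgebra.lieSpan R L (M : Set L)).normalizer :=
    normalizer_sup_lieSpan_eq_top hM htop ▸ LieSubalgebra.mem_top x
  exact (LieSubalgebra.mem_normalizer_iff _ x).1 hx y hy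

theorem sup_lieSpan_le_of_le (hM : M ≤ bracketSpan H.toSubmodule M) {I : LieIdeal R L}
    (hI : H.toSubmodule ≤ I.toSubmodule) :
    H.toSubmodule ⊔ (LieSubalgebra.lieSpan R L (M : Set L)).toSubmodule ≤ I.toSubmodule := by
  have hMI : M ≤ I.toSubmodule :=
    hM.trans (bracketSpan_le.2 fun x hx v _ => lie_mem_left R L I x v (hI hx))
  have hspan : LieSubalgebra.lieSpan R L (M : Set L) ≤ LieIdeal.toLieSubalgebra R L I :=
    LieSubalgebra.lieSpan_le.2 hMI
  exact sup_le hI hspan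

end IdealGeneratedBySubalgebra

section AdNontrivPart

variable {K : Type*} [Field K] {g : Type*} [LieRing g] [LieAlgebra K g]
  {r : LieSubalgebra K g}

theorem IsIrreducibleAdSubmodule.bracketSpan_eq {V : Submodule K g}
    (hV : IsIrreducibleAdSubmodule K g r V) (hnt : HasNontrivialAdAction K g r V) :
    bracketSpan r.toSubmodule V = V := by
  obtain ⟨hstable, -, hmin⟩ := hV
  have hle : bracketSpan r.toSubmodule V ≤ V := bracketSpan_le.2 hstable
  refine (hmin _ hle fun x hx v hv => lie_mem_bracketSpan hx (hle hv)).resolve_left fun hbot => ?_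
  obtain ⟨x, hx, v, hv, hne⟩ := hnt
  exact hne ((Submodule.eq_bot_iff _).1 hbot _ (lie_mem_bracketSpan hx hv))

theorem le_maxTrivSubmodule_of_not_hasNontrivialAdAction {V : Submodule K g}
    (hV : ¬ HasNontrivialAdAction K g r V) :
    V ≤ (LieModule.maxTrivSubmodule K r g).toSubmodule := fun v hv x =>
  by_contra fun hne => hV ⟨x, x.2, v, hv, hne⟩

theorem bracketSpan_adNontrivPart (n : Submodule K g) :
    bracketSpan r.toSubmodule (adNontrivPart K g r n) = adNontrivPart K g r n := by
  rw [adNontrivPart, sSup_eq_iSup', bracketSpan, Submodule.map₂_iSup_right]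
  exact iSup_congr fun V => V.2.2.1.bracketSpan_eq V.2.2.2

theorem sSup_irreducible_le_adNontrivPart_sup_maxTrivSubmodule (n : Submodule K g) :
    sSup {V : Submodule K g | V ≤ n ∧ IsIrreducibleAdSubmodule K g r V} ≤
      adNontrivPart K g r n ⊔ (LieModule.maxTrivSubmodule K r g).toSubmodule := by
  refine sSup_le ?_
  rintro V ⟨hVn, hV⟩
  by_cases hnt : HasNontrivialAdAction K g r V
  · exact le_sup_of_le_left (le_sSup ⟨hVn, hV, hnt⟩)
  · exact le_sup_of_le_right (le_maxTrivSubmodule_of_not_hasNontrivialAdAction hnt)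

end AdNontrivPart

theorem stmt14_general (K : Type*) [Field K] (g : Type*) [LieRing g] [LieAlgebra K g]
    (r : LieSubalgebra K g) (n : Submodule K g) (hsup : r.toSubmodule ⊔ n = ⊤)
    (hsemisimple : n = sSup {V : Submodule K g | V ≤ n ∧ IsIrreducibleAdSubmodule K g r V}) :
    (∀ x : g, ∀ y ∈ r.toSubmodule ⊔ (adNontrivSubalgebra K g r n).toSubmodule,
      ⁅x, y⁆ ∈ r.toSubmodule ⊔ (adNontrivSubalgebra K g r n).toSubmodule) ∧
    (∀ i : LieIdeal K g, (∀ x ∈ r, x ∈ i) →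
      ∀ y ∈ r.toSubmodule ⊔ (adNontrivSubalgebra K g r n).toSubmodule, y ∈ i) := by
  have hM : bracketSpan r.toSubmodule (adNontrivPart K g r n) = adNontrivPart K g r n :=
    bracketSpan_adNontrivPart n
  have hn : n ≤ adNontrivPart K g r n ⊔ (LieModule.maxTrivSubmodule K r g).toSubmodule :=
    hsemisimple.le.trans (sSup_irreducible_le_adNontrivPart_sup_maxTrivSubmodule n)
  have htop : r.toSubmodule ⊔
      (adNontrivPart K g r n ⊔ (LieModule.maxTrivSubmodule K r g).toSubmodule) = ⊤ :=
    top_le_iff.1 (hsup.ge.trans (sup_le_sup_left hn _))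
  exact ⟨fun x _ hy => lie_mem_sup_lieSpan hM htop x hy,
    fun _ hi _ hy => sup_lieSpan_le_of_le hM.ge hi hy⟩

/-- Lemma 5: if `g = r ⊕ n` with `n` a completely reducible `r`-module under the adjoint
action, then `r ⊕ s` is the minimal Lie ideal of `g` containing `r`, where `s` is the
subalgebra generated by the sum `n₁` of all nontrivial irreducible `r`-submodules of `n`. -/
theorem stmt14 (K : Type*) [Field K] [IsAlgClosed K] [CharZero K]
    (g : Type*) [LieRing g] [LieAlgebra K g] [Module.Finite K g]
    (r : LieSubalgebra K g) (n : LieIdeal K g)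
    (hsup : r.toSubmodule ⊔ n.toSubmodule = ⊤)
    (hinf : r.toSubmodule ⊓ n.toSubmodule = ⊥)
    (hsemisimple : n.toSubmodule =
      sSup {V : Submodule K g | V ≤ n.toSubmodule ∧ IsIrreducibleAdSubmodule K g r V}) :
    (∀ x : g, ∀ y ∈ r.toSubmodule ⊔ (adNontrivSubalgebra K g r n.toSubmodule).toSubmodule,
      ⁅x, y⁆ ∈ r.toSubmodule ⊔ (adNontrivSubalgebra K g r n.toSubmodule).toSubmodule) ∧
    (∀ i : LieIdeal K g, (∀ x ∈ r, x ∈ i) →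
      ∀ y ∈ r.toSubmodule ⊔ (adNontrivSubalgebra K g r n.toSubmodule).toSubmodule,
        y ∈ i) :=
  stmt14_general K g r n.toSubmodule hsup hsemisimple
end
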